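/- arXiv:1308.0754 — 2 statements merged into one kernel-verified Lean document; each statement's English description precedes it below -/
import Mathlib

section
/- Let μ be a Haar measure on SL₂(ℝ) normalized so that μ({g : ‖g‖ < Q})/Q² → 2π as Q → ∞. For M ∈ SL₂(ℝ) with M·i ≠ i, Q > 0 and ξ > 0, define R_M(Q,ξ) := {g ∈ SL₂(ℝ) : g·i ≠ i, gM·i ≠ i, ‖g‖ < Q, ‖gM‖ < Q, |θ_g − θ_{gM}| < 2ξ/Q²}. Then for every ξ > 0 there exist constants C > 0 and Q₀ > 0 such that for all Q ≥ Q₀ and all M ∈ SL₂(ℝ) with M·i ≠ i: |μ(R_M(Q,ξ)) − 2Q²·∫₀^ξ f_ζ(ℓ(M)) dζ| ≤ C·‖M‖²·Q^{2/3}. -/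
/-!
Write `p = (a + d) + i (c - b)` and `q = (a - d) + i (b + c)` for `g ∈ SL(2,ℝ)`. Then
`|p|² - |q|² = 4`, `‖g‖² = (|p|² + |q|²) / 2`, and the Cayley transform of `g·i` is `q̄ / p`, so that
`θ_g = -arg (p q)`.

*Haar measure.* Pushing Lebesgue measure on the matrices with determinant in `(0, 1)` forward to
`SL(2,ℝ)` along rays gives a left invariant measure, which is therefore a multiple of `μ`.
Substituting `q = p w` and passing to polar coordinates in `w`, one finds that in the coordinates
`x = ‖g‖² / 2` and `φ`, the argument of `q / p` measured from any fixed origin, it is a multiple of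
`dx dφ`. The growth of norm balls fixes the constant: `μ = 2 dx dφ` (`haar_polar`).

*Geometry.* Fix `M`, put `l = ℓ(M)` and choose the origin of `φ` according to `M` (`relDir`). There
are exact formulas for `‖gM‖²` (`fnormSq_mul`) and for `θ_g - θ_{gM}` (`pq_mul`, `angDist_lt_iff`)
in terms of `x` and `φ`. Replacing `√(x² - 1)` by `x` costs at most `1`, so with
`u = cosh l + sinh l cos φ` and `X = Q² / 2` the conditions defining `R_M(Q, ξ)` become
`x < X`, `x u < X` and `X sinh l |sin φ| / ξ < x u`, up to additive errors of size `cosh l`.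
For each `φ` this is an interval of radii of length
`X (min (1, 1/u) - sinh l |sin φ| / (ξ u))⁺ + O(cosh l / u + 1)`. The Poisson kernel `1/u` has mean
one (`integral_stretch_inv`), so the total error is `O(cosh l) = O(‖M‖²)`, uniformly in `Q`; this
is stronger than the bound claimed.

*Main term.* The positive part above is `∫₀^ξ v 1_{v ≤ ζ min (1, 1/u)} dζ / ζ²` with
`v = sinh l |sin φ| / u`. Exchanging the integrals and substituting `w = log u`, for which
`|dw| = v dφ`, leaves the length of the set of `w ∈ (-l, l)` subject to a quadratic inequality in
`e^w` and the same one in `e^{-w}`; this length is `ζ² f_ζ(l)` (`volume_sineBound`,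
`integral_fxi`).
-/

open Matrix MeasureTheory Real Filter Topology
open scoped MatrixGroups Pointwise

noncomputable section

/-- `SL(2,ℝ)` as the special linear group of 2×2 real matrices. -/
abbrev SL2R := Matrix.SpecialLinearGroup (Fin 2) ℝ

instance : TopologicalSpace SL2R :=
  show TopologicalSpace {A : Matrix (Fin 2) (Fin 2) ℝ // A.det = 1} from inferInstance

instance : MeasurableSpace SL2R := borel SL2R

/-- Squared Frobenius norm `‖g‖² = a² + b² + c² + d²`. -/
def fnormSq (g : SL2R) : ℝ :=
  (g : Matrix (Fin 2) (Fin 2) ℝ) 0 0 ^ 2 + (g : Matrix (Fin 2) (Fin 2) ℝ) 0 1 ^ 2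
    + (g : Matrix (Fin 2) (Fin 2) ℝ) 1 0 ^ 2 + (g : Matrix (Fin 2) (Fin 2) ℝ) 1 1 ^ 2

/-- Frobenius norm `‖g‖`. -/
def fnorm (g : SL2R) : ℝ := Real.sqrt (fnormSq g)

/-- The angle `θ_g = arg((g·i − i)/(g·i + i)) ∈ (−π, π]`; equals `0` when `g·i = i`. -/
def theta (g : SL2R) : ℝ :=
  Complex.arg ((((g • UpperHalfPlane.I : UpperHalfPlane) : ℂ) - Complex.I)
    / (((g • UpperHalfPlane.I : UpperHalfPlane) : ℂ) + Complex.I))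

/-- Distance between two angles: the distance from `a − b` to the nearest element of `2πℤ`. -/
def angDist (a b : ℝ) : ℝ := |((a - b : ℝ) : Real.Angle).toReal|

/-- Inverse hyperbolic cosine. -/
def arccosh (x : ℝ) : ℝ := Real.log (x + Real.sqrt (x ^ 2 - 1))

/-- `ℓ(M) = arccosh(‖M‖²/2)`, the hyperbolic distance from `i` to `M·i`. -/
def ell (M : SL2R) : ℝ := arccosh (fnormSq M / 2)

/-- The pair-correlation density building block `f_ξ(ℓ)`. -/
def fxi (ξ l : ℝ) : ℝ :=
  if Real.sinh l ≤ ξ then 2 / ξ ^ 2 * l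
  else if 2 * Real.sinh (l / 2) ≤ ξ then
    2 / ξ ^ 2 * (l + Real.log (1 + ξ ^ 2)
      - 2 * Real.log (Real.cosh l + Real.sqrt (Real.sinh l ^ 2 - ξ ^ 2)))
  else 2 / ξ ^ 2 * (l - Real.log (Real.cosh l + Real.sqrt (Real.sinh l ^ 2 - ξ ^ 2)))

/-- The rotation matrix `k_φ ∈ SL(2,ℝ)`. -/
def kMat (φ : ℝ) : SL2R :=
  ⟨!![Real.cos (φ / 2), Real.sin (φ / 2); -Real.sin (φ / 2), Real.cos (φ / 2)], by
    rw [Matrix.det_fin_two_of]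
    linear_combination Real.sin_sq_add_cos_sq (φ / 2)⟩

/-- The diagonal matrix `a_t ∈ SL(2,ℝ)`. -/
def aMat (t : ℝ) : SL2R :=
  ⟨!![Real.exp (t / 2), 0; 0, Real.exp (-t / 2)], by
    rw [Matrix.det_fin_two_of, ← Real.exp_add]
    norm_num
    ring⟩

/-- The region `R_M(Q,ξ)` of group elements `g` with `‖g‖, ‖gM‖ < Q` and
`|θ_g − θ_{gM}| < 2ξ/Q²`. -/
def RM (M : SL2R) (Q ξ : ℝ) : Set SL2R :=
  {g : SL2R | g • UpperHalfPlane.I ≠ UpperHalfPlane.I ∧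
    (g * M) • UpperHalfPlane.I ≠ UpperHalfPlane.I ∧
    fnorm g < Q ∧ fnorm (g * M) < Q ∧
    angDist (theta g) (theta (g * M)) < 2 * ξ / Q ^ 2}

/-! ### Topology of `SL(2,ℝ)` -/

lemma isEmbedding_coe : Topology.IsEmbedding
    (fun g : SL2R => (g : Matrix (Fin 2) (Fin 2) ℝ)) :=
  Topology.IsEmbedding.subtypeVal

lemma isClosedEmbedding_coe : Topology.IsClosedEmbedding
    (fun g : SL2R => (g : Matrix (Fin 2) (Fin 2) ℝ)) := by
  refine ⟨isEmbedding_coe, ?_⟩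
  have : Set.range (fun g : SL2R => (g : Matrix (Fin 2) (Fin 2) ℝ))
      = {A : Matrix (Fin 2) (Fin 2) ℝ | A.det = 1} := Subtype.range_coe
  rw [this]
  exact isClosed_eq (by fun_prop) continuous_const

lemma continuous_coe_SL2R : Continuous (fun g : SL2R => (g : Matrix (Fin 2) (Fin 2) ℝ)) :=
  isEmbedding_coe.continuous

instance instBorelSpaceSL2R : BorelSpace SL2R := ⟨rfl⟩

instance instT2SpaceSL2R : T2Space SL2R := isEmbedding_coe.t2Space

instance instSecondCountableSL2R : SecondCountableTopology SL2R :=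
  haveI : SecondCountableTopology (Matrix (Fin 2) (Fin 2) ℝ) :=
    inferInstanceAs (SecondCountableTopology (Fin 2 → Fin 2 → ℝ))
  isEmbedding_coe.secondCountableTopology

instance instLocallyCompactSL2R : LocallyCompactSpace SL2R :=
  haveI : LocallyCompactSpace (Matrix (Fin 2) (Fin 2) ℝ) :=
    inferInstanceAs (LocallyCompactSpace (Fin 2 → Fin 2 → ℝ))
  isClosedEmbedding_coe.locallyCompactSpace

instance instIsTopologicalGroupSL2R : IsTopologicalGroup SL2R where
  continuous_mul := by
    rw [isEmbedding_coe.continuous_iff]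
    have h1 : Continuous fun x : SL2R × SL2R => (x.1 : Matrix (Fin 2) (Fin 2) ℝ) :=
      continuous_coe_SL2R.comp continuous_fst
    have h2 : Continuous fun x : SL2R × SL2R => (x.2 : Matrix (Fin 2) (Fin 2) ℝ) :=
      continuous_coe_SL2R.comp continuous_snd
    exact (h1.matrix_mul h2).congr fun x => (Matrix.SpecialLinearGroup.coe_mul x.1 x.2).symm
  continuous_inv := by
    rw [isEmbedding_coe.continuous_iff]
    exact continuous_coe_SL2R.matrix_adjugate.congr
      fun x => (Matrix.SpecialLinearGroup.coe_inv x).symm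

/-! ### Cartan coordinates and Haar measure as a cone measure -/

/-- The first Cartan coordinate `(a + d) + i (c - b)`: twice the lower right entry of
the conjugate of `g` in `SU(1,1)` under the Cayley transform. -/
def pC (g : SL2R) : ℂ :=
  ⟨(g : Matrix (Fin 2) (Fin 2) ℝ) 0 0 + (g : Matrix (Fin 2) (Fin 2) ℝ) 1 1,
    (g : Matrix (Fin 2) (Fin 2) ℝ) 1 0 - (g : Matrix (Fin 2) (Fin 2) ℝ) 0 1⟩

/-- The second Cartan coordinate `(a - d) + i (b + c)`: twice the lower left entry of
the conjugate of `g` in `SU(1,1)` under the Cayley transform. -/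
def qC (g : SL2R) : ℂ :=
  ⟨(g : Matrix (Fin 2) (Fin 2) ℝ) 0 0 - (g : Matrix (Fin 2) (Fin 2) ℝ) 1 1,
    (g : Matrix (Fin 2) (Fin 2) ℝ) 0 1 + (g : Matrix (Fin 2) (Fin 2) ℝ) 1 0⟩

/-- The coordinates `(p, q) ∈ ℂ²` on real `2 × 2` matrices, a matrix being given by its pair of
columns so that left multiplication acts diagonally. -/
def colEquiv : (ℂ × ℂ) ≃ₗ[ℝ] (Fin 2 → ℝ) × (Fin 2 → ℝ) where
  toFun z := (![(z.1.re + z.2.re) / 2, (z.1.im + z.2.im) / 2],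
    ![(z.2.im - z.1.im) / 2, (z.1.re - z.2.re) / 2])
  invFun w := (⟨w.1 0 + w.2 1, w.1 1 - w.2 0⟩, ⟨w.1 0 - w.2 1, w.1 1 + w.2 0⟩)
  map_add' z w := by
    ext i <;> fin_cases i <;> simp <;> ring
  map_smul' c z := by
    ext i <;> fin_cases i <;> simp <;> ring_nf
  left_inv z := by
    ext <;> simp <;> ring_nf
  right_inv w := by
    ext i <;> fin_cases i <;> simp

/-- The real matrix with Cartan coordinates `(p, q)`. -/
def matOf (z : ℂ × ℂ) : Matrix (Fin 2) (Fin 2) ℝ :=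
  !![(z.1.re + z.2.re) / 2, (z.2.im - z.1.im) / 2;
    (z.1.im + z.2.im) / 2, (z.1.re - z.2.re) / 2]

lemma det_matOf (z : ℂ × ℂ) :
    (matOf z).det = (Complex.normSq z.1 - Complex.normSq z.2) / 4 := by
  rw [matOf, Matrix.det_fin_two_of, Complex.normSq_apply, Complex.normSq_apply]
  ring

lemma continuous_matOf : Continuous matOf := by
  refine continuous_matrix fun i j => ?_
  fin_cases i <;> fin_cases j <;> simp [matOf] <;> fun_prop

/-- Left multiplication of matrices by `h`, in Cartan coordinates. -/
def leftMul (h : SL2R) : (ℂ × ℂ) →ₗ[ℝ] (ℂ × ℂ) :=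
  (colEquiv.symm : _ →ₗ[ℝ] _) ∘ₗ
    (LinearMap.prodMap (Matrix.toLin' (h : Matrix (Fin 2) (Fin 2) ℝ))
      (Matrix.toLin' (h : Matrix (Fin 2) (Fin 2) ℝ))) ∘ₗ (colEquiv : _ →ₗ[ℝ] _)

/-- Left multiplication acts as `h` on each of the two columns, so its determinant is
`(det h)²`. -/
lemma det_leftMul (h : SL2R) : LinearMap.det (leftMul h) = 1 := by
  have := LinearMap.det_conj (LinearMap.prodMap
    (Matrix.toLin' (h : Matrix (Fin 2) (Fin 2) ℝ))
      (Matrix.toLin' (h : Matrix (Fin 2) (Fin 2) ℝ))) colEquiv.symm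
  rw [LinearEquiv.symm_symm] at this
  rw [leftMul, this, LinearMap.det_prodMap, LinearMap.det_toLin', h.det_coe, one_mul]

instance instIsAddHaarComplexProd : (volume : Measure (ℂ × ℂ)).IsAddHaarMeasure :=
  inferInstanceAs (Measure.IsAddHaarMeasure ((volume : Measure ℂ).prod (volume : Measure ℂ)))

lemma measurePreserving_leftMul (h : SL2R) : MeasurePreserving (leftMul h) := by
  refine ⟨(leftMul h).continuous_of_finiteDimensional.measurable, ?_⟩
  rw [Measure.map_linearMap_addHaar_eq_smul_addHaar _ (by rw [det_leftMul]; exact one_ne_zero),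
    det_leftMul]
  simp

lemma matOf_leftMul (h : SL2R) (z : ℂ × ℂ) :
    matOf (leftMul h z) = (h : Matrix (Fin 2) (Fin 2) ℝ) * matOf z := by
  ext i j
  fin_cases i <;> fin_cases j <;>
    simp [matOf, leftMul, colEquiv, Matrix.mul_apply, Fin.sum_univ_two]

/-- The point of `SL(2,ℝ)` on the ray through a matrix of positive determinant; the value `1` on
the other matrices is junk. -/
def proj (z : ℂ × ℂ) : SL2R :=
  if h : 0 < (matOf z).det then
    ⟨(√(matOf z).det)⁻¹ • matOf z, by
      rw [Matrix.det_smul, Fintype.card_fin, inv_pow, Real.sq_sqrt h.le, inv_mul_cancel₀ h.ne']⟩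
  else 1

lemma coe_proj {z : ℂ × ℂ} (h : 0 < (matOf z).det) :
    (proj z : Matrix (Fin 2) (Fin 2) ℝ) = (√(matOf z).det)⁻¹ • matOf z := by
  unfold proj; exact congrArg Subtype.val (dif_pos h)

lemma proj_leftMul (h : SL2R) {z : ℂ × ℂ} (hz : 0 < (matOf z).det) :
    proj (leftMul h z) = h * proj z := by
  have hd : (matOf (leftMul h z)).det = (matOf z).det := by
    rw [matOf_leftMul, Matrix.det_mul, h.det_coe, one_mul]
  apply Subtype.ext
  rw [coe_proj (by rwa [hd]), hd, matOf_leftMul, Matrix.SpecialLinearGroup.coe_mul, coe_proj hz,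
    Matrix.mul_smul]

/-- The truncated cone over `SL(2,ℝ)`: the matrices with determinant in `(0, 1)`. -/
def coneU : Set (ℂ × ℂ) := {z | 0 < (matOf z).det ∧ (matOf z).det < 1}

lemma continuous_det_matOf : Continuous fun z => (matOf z).det :=
  continuous_matOf.matrix_det

lemma isOpen_coneU : IsOpen coneU :=
  (isOpen_lt continuous_const continuous_det_matOf).inter
    (isOpen_lt continuous_det_matOf continuous_const)

lemma continuousOn_proj : ContinuousOn proj coneU := by
  rw [isEmbedding_coe.isInducing.continuousOn_iff]
  have : ContinuousOn (fun z => (√(matOf z).det)⁻¹ • matOf z) coneU := by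
    refine ContinuousOn.smul (f := fun z => (√(matOf z).det)⁻¹)
      (ContinuousOn.inv₀ (G₀ := ℝ) ?_ ?_) continuous_matOf.continuousOn
    · exact (Real.continuous_sqrt.comp continuous_det_matOf).continuousOn
    · intro z hz
      exact (Real.sqrt_pos.2 hz.1).ne'
  exact this.congr fun z hz => coe_proj hz.1

lemma aemeasurable_proj : AEMeasurable proj (volume.restrict coneU) :=
  continuousOn_proj.aemeasurable isOpen_coneU.measurableSet

/-- The cone measure: a set of `SL(2,ℝ)` is given the Lebesgue measure of the truncated cone over
it. It is left invariant because left multiplication preserves both Lebesgue measure and the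
determinant. -/
def coneMeasure : Measure SL2R := Measure.map proj (volume.restrict coneU)

instance : coneMeasure.IsMulLeftInvariant where
  map_mul_left_eq_self h := by
    have hU : leftMul h ⁻¹' coneU = coneU := by
      ext z
      simp only [coneU, Set.mem_preimage, Set.mem_ofPred_eq, matOf_leftMul, Matrix.det_mul,
        h.det_coe, one_mul]
    have hmp : MeasurePreserving (leftMul h) (volume.restrict coneU) (volume.restrict coneU) := by
      have := (measurePreserving_leftMul h).restrict_preimage isOpen_coneU.measurableSet
      rwa [hU] at this
    have hae : (fun x => h * x) ∘ proj =ᵐ[volume.restrict coneU] proj ∘ leftMul h := by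
      filter_upwards [ae_restrict_mem isOpen_coneU.measurableSet] with z hz
      exact (proj_leftMul h hz.1).symm
    have hpr : AEMeasurable proj (Measure.map (leftMul h) (volume.restrict coneU)) := by
      rw [hmp.map_eq]; exact aemeasurable_proj
    rw [coneMeasure, AEMeasurable.map_map_of_aemeasurable
      (measurable_const_mul h).aemeasurable aemeasurable_proj, Measure.map_congr hae,
      ← AEMeasurable.map_map_of_aemeasurable hpr hmp.measurable.aemeasurable, hmp.map_eq]

lemma fnormSq_eq (g : SL2R) :
    fnormSq g = (Complex.normSq (pC g) + Complex.normSq (qC g)) / 2 := by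
  simp only [fnormSq, pC, qC, Complex.normSq_mk]
  ring

lemma normSq_sub (g : SL2R) : Complex.normSq (pC g) - Complex.normSq (qC g) = 4 := by
  have := g.det_coe
  rw [Matrix.det_fin_two] at this
  simp only [pC, qC, Complex.normSq_mk]
  linear_combination 4 * this

lemma pC_proj {z : ℂ × ℂ} (h : 0 < (matOf z).det) :
    pC (proj z) = ((√(matOf z).det)⁻¹ : ℝ) * z.1 := by
  apply Complex.ext <;> simp [pC, coe_proj h, matOf] <;> ring_nf

lemma qC_proj {z : ℂ × ℂ} (h : 0 < (matOf z).det) :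
    qC (proj z) = ((√(matOf z).det)⁻¹ : ℝ) * z.2 := by
  apply Complex.ext <;> simp [qC, coe_proj h, matOf] <;> ring_nf

lemma continuous_fnormSq : Continuous fnormSq := by
  have := continuous_coe_SL2R
  unfold fnormSq
  fun_prop

/-- The truncated cone over a set of bounded norm is bounded. -/
instance : IsFiniteMeasureOnCompacts coneMeasure where
  lt_top_of_isCompact K hK := by
    obtain ⟨R, hR⟩ := (hK.image continuous_fnormSq).bddAbove
    rw [coneMeasure, Measure.map_apply_of_aemeasurable aemeasurable_proj hK.measurableSet,
      Measure.restrict_apply' isOpen_coneU.measurableSet]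
    have hsub : proj ⁻¹' K ∩ coneU ⊆ Metric.closedBall 0 (√(2 * R)) := by
      rintro z ⟨hz, hU⟩
      have h1 : fnormSq (proj z) ≤ R := hR (Set.mem_image_of_mem _ hz)
      have hd := hU.1
      rw [fnormSq_eq, pC_proj hd, qC_proj hd, Complex.normSq_mul, Complex.normSq_mul,
        Complex.normSq_ofReal, ← mul_inv, Real.mul_self_sqrt hd.le, ← mul_add, div_le_iff₀ two_pos,
        inv_mul_le_iff₀ hd] at h1
      have hsum := add_nonneg (Complex.normSq_nonneg z.1) (Complex.normSq_nonneg z.2)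
      have hR0 : 0 ≤ R * 2 := by
        by_contra hneg
        push Not at hneg
        nlinarith
      have h2 : Complex.normSq z.1 + Complex.normSq z.2 ≤ 2 * R := by nlinarith [hU.2]
      rw [mem_closedBall_zero_iff, Prod.norm_def]
      have := Complex.normSq_nonneg z.1
      have := Complex.normSq_nonneg z.2
      refine max_le ?_ ?_ <;> apply Real.le_sqrt_of_sq_le <;> rw [← Complex.normSq_eq_norm_sq] <;>
        linarith
    exact (measure_mono hsub).trans_lt measure_closedBall_lt_top

/-! ### The cone measure in polar coordinates -/

/-- Multiplication by `p` on `ℂ` has Jacobian `|p|²`. -/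
lemma lintegral_complex_mul {p : ℂ} (hp : p ≠ 0) {F : ℂ → ENNReal} (hF : Measurable F) :
    ∫⁻ q, F q = ENNReal.ofReal (Complex.normSq p) * ∫⁻ w, F (p * w) := by
  have hdet : LinearMap.det (Algebra.lmul ℝ ℂ p) = Complex.normSq p := by
    rw [← Algebra.norm_apply, Algebra.norm_complex_apply]
  have hpos : 0 < Complex.normSq p := Complex.normSq_pos.2 hp
  have hmap := Measure.map_linearMap_addHaar_eq_smul_addHaar (volume : Measure ℂ)
    (f := Algebra.lmul ℝ ℂ p) (by rw [hdet]; exact hpos.ne')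
  have h1 : ∫⁻ w, F (p * w) = ∫⁻ q, F q ∂(Measure.map (Algebra.lmul ℝ ℂ p) volume) := by
    rw [lintegral_map hF (Algebra.lmul ℝ ℂ p).continuous_of_finiteDimensional.measurable]
    rfl
  rw [h1, hmap, lintegral_smul_measure, hdet, smul_eq_mul, ← mul_assoc,
    ← ENNReal.ofReal_mul hpos.le, abs_of_pos (inv_pos.2 hpos), mul_inv_cancel₀ hpos.ne',
    ENNReal.ofReal_one, one_mul]

/-- The density `(1 - |w|²)⁻²` of the hyperbolic area of the unit disc (up to a constant factor),
extended by `0`. -/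
def discDensity (w : ℂ) : ENNReal :=
  if Complex.normSq w < 1 then ENNReal.ofReal (1 / (1 - Complex.normSq w) ^ 2) else 0

/-- The indicator of `(0, 4)`: the point `(p, q)` lies in the truncated cone when
`|p|² - |q|² ∈ (0, 4)`. -/
def radialIndicator (t : ℝ) : ENNReal := (Set.Ioo (0 : ℝ) 4).indicator 1 t

lemma measurable_radialIndicator : Measurable radialIndicator :=
  measurable_one.indicator measurableSet_Ioo

/-- The mass `∫ |p|² 1_{|p|² < 4} dp` of the fibre over the centre of the disc. Its value is
irrelevant: the constant relating the cone measure to `μ` is recovered from the growth of norm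
balls. -/
def coneConst : ENNReal :=
  ∫⁻ p : ℂ, ENNReal.ofReal (Complex.normSq p) * radialIndicator (Complex.normSq p)

lemma measurable_normSq : Measurable Complex.normSq := Complex.continuous_normSq.measurable

/-- The integral over the fibre `{(p, p w)}` of the truncated cone; the scaling
`p ↦ (1 - |w|²)^(-1/2) p` reduces it to the fibre over `w = 0`. -/
lemma lintegral_radial (w : ℂ) :
    ∫⁻ p : ℂ, ENNReal.ofReal (Complex.normSq p) *
      radialIndicator (Complex.normSq p * (1 - Complex.normSq w)) = coneConst * discDensity w := by
  have hm := measurable_normSq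
  have hmr := measurable_radialIndicator
  by_cases hw : Complex.normSq w < 1
  · have hs : 0 < 1 - Complex.normSq w := by linarith
    set s := 1 - Complex.normSq w with hsdef
    have hp : (((√s)⁻¹ : ℝ) : ℂ) ≠ 0 := by
      exact_mod_cast (inv_pos.2 (Real.sqrt_pos.2 hs)).ne'
    have hn : Complex.normSq (((√s)⁻¹ : ℝ) : ℂ) = s⁻¹ := by
      rw [Complex.normSq_ofReal, ← mul_inv, Real.mul_self_sqrt hs.le]
    rw [lintegral_complex_mul hp (by fun_prop), hn]
    have : ∀ p : ℂ, ENNReal.ofReal (Complex.normSq ((((√s)⁻¹ : ℝ) : ℂ) * p)) *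
        radialIndicator (Complex.normSq ((((√s)⁻¹ : ℝ) : ℂ) * p) * s)
        = ENNReal.ofReal s⁻¹ *
          (ENNReal.ofReal (Complex.normSq p) * radialIndicator (Complex.normSq p)) := by
      intro p
      rw [Complex.normSq_mul, hn, ENNReal.ofReal_mul (inv_pos.2 hs).le, mul_assoc]
      congr 3
      field_simp
    simp_rw [this]
    rw [lintegral_const_mul _ (by fun_prop), ← mul_assoc, ← ENNReal.ofReal_mul (inv_pos.2 hs).le,
      discDensity, if_pos hw, mul_comm, coneConst]
    congr 2
    rw [← hsdef]; field_simp
  · rw [discDensity, if_neg hw, mul_zero, lintegral_eq_zero_iff (by fun_prop)]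
    refine ae_of_all _ fun p => ?_
    have : Complex.normSq p * (1 - Complex.normSq w) ≤ 0 :=
      mul_nonpos_of_nonneg_of_nonpos (Complex.normSq_nonneg p) (by linarith)
    simp [radialIndicator, Set.indicator, this.not_gt]

lemma continuous_pC : Continuous pC := by
  have := continuous_coe_SL2R
  have h : pC = fun g : SL2R => (((g : Matrix (Fin 2) (Fin 2) ℝ) 0 0
      + (g : Matrix (Fin 2) (Fin 2) ℝ) 1 1 : ℝ) : ℂ) + (((g : Matrix (Fin 2) (Fin 2) ℝ) 1 0
      - (g : Matrix (Fin 2) (Fin 2) ℝ) 0 1 : ℝ) : ℂ) * Complex.I := by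
    ext g; exact Complex.mk_eq_add_mul_I _ _
  rw [h]
  fun_prop

lemma continuous_qC : Continuous qC := by
  have := continuous_coe_SL2R
  have h : qC = fun g : SL2R => (((g : Matrix (Fin 2) (Fin 2) ℝ) 0 0
      - (g : Matrix (Fin 2) (Fin 2) ℝ) 1 1 : ℝ) : ℂ) + (((g : Matrix (Fin 2) (Fin 2) ℝ) 0 1
      + (g : Matrix (Fin 2) (Fin 2) ℝ) 1 0 : ℝ) : ℂ) * Complex.I := by
    ext g; exact Complex.mk_eq_add_mul_I _ _
  rw [h]
  fun_prop

/-- Under the cone measure `q / p` has a rotation invariant density, namely a multiple of hyperbolic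
area; this is why an arbitrary rotation `ζ` may be inserted. -/
lemma coneMeasure_disc {T : Set ℂ} (hT : MeasurableSet T) {ζ : ℂ} (hζ : ‖ζ‖ = 1) :
    coneMeasure {g | qC g / pC g * ζ ∈ T} = coneConst * ∫⁻ w, T.indicator discDensity w := by
  have hζ0 : ζ ≠ 0 := by rintro rfl; simp at hζ
  have hm := measurable_normSq
  have hmr := measurable_radialIndicator
  have hmp := continuous_pC.measurable
  have hmq := continuous_qC.measurable
  have hE : MeasurableSet {g : SL2R | qC g / pC g * ζ ∈ T} :=
    ((hmq.div hmp).mul_const ζ) hT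
  set F : ℂ × ℂ → ENNReal := fun z =>
    radialIndicator (Complex.normSq z.1 - Complex.normSq z.2) * T.indicator 1 (z.2 / z.1 * ζ)
    with hFdef
  have hT1 : Measurable (T.indicator (1 : ℂ → ENNReal)) := measurable_one.indicator hT
  have hF : Measurable F := by fun_prop
  have hset : MeasurableSet (coneU ∩ {z : ℂ × ℂ | z.2 / z.1 * ζ ∈ T}) :=
    isOpen_coneU.measurableSet.inter
      (((measurable_snd.div measurable_fst).mul_const ζ) hT)
  have h1 : coneMeasure {g | qC g / pC g * ζ ∈ T} = ∫⁻ z, F z := by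
    rw [coneMeasure, Measure.map_apply_of_aemeasurable aemeasurable_proj hE,
      Measure.restrict_apply' isOpen_coneU.measurableSet]
    have hs : proj ⁻¹' {g | qC g / pC g * ζ ∈ T} ∩ coneU
        = coneU ∩ {z : ℂ × ℂ | z.2 / z.1 * ζ ∈ T} := by
      ext z
      simp only [Set.mem_inter_iff, Set.mem_preimage, Set.mem_ofPred_eq]
      rw [and_comm]
      refine and_congr_right fun hz => ?_
      have hd := hz.1
      rw [pC_proj hd, qC_proj hd, mul_div_mul_left]
      exact_mod_cast (inv_pos.2 (Real.sqrt_pos.2 hd)).ne'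
    rw [hs, ← lintegral_indicator_one hset]
    refine lintegral_congr fun z => ?_
    have hc : z ∈ coneU ↔ Complex.normSq z.1 - Complex.normSq z.2 ∈ Set.Ioo (0 : ℝ) 4 := by
      rw [coneU, Set.mem_ofPred_eq, det_matOf, Set.mem_Ioo]
      constructor <;> rintro ⟨h1, h2⟩ <;> constructor <;> linarith
    by_cases h1 : z ∈ coneU <;> by_cases h2 : z.2 / z.1 * ζ ∈ T
    · simp [hFdef, radialIndicator, h1, h2, hc.1 h1]
    · simp [hFdef, h2]
    · have := mt hc.2 h1
      simp only [hFdef, radialIndicator]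
      rw [Set.indicator_of_notMem (fun h => h1 h.1), Set.indicator_of_notMem this, zero_mul]
    · simp [hFdef, h2]
  -- for fixed `p ≠ 0` substitute `q = p ζ⁻¹ w`, whose Jacobian is `|p|²`
  have h2 : ∀ p : ℂ, p ≠ 0 → ∫⁻ q, F (p, q) = ∫⁻ w, T.indicator 1 w *
      (ENNReal.ofReal (Complex.normSq p) *
        radialIndicator (Complex.normSq p * (1 - Complex.normSq w))) := by
    intro p hp
    have hζn : Complex.normSq ζ = 1 := by rw [Complex.normSq_eq_norm_sq, hζ, one_pow]
    have hn : Complex.normSq (p * ζ⁻¹) = Complex.normSq p := by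
      rw [Complex.normSq_mul, Complex.normSq_inv, hζn, inv_one, mul_one]
    rw [lintegral_complex_mul (mul_ne_zero hp (inv_ne_zero hζ0)) (by fun_prop), hn,
      ← lintegral_const_mul _ (by fun_prop)]
    refine lintegral_congr fun w => ?_
    have e1 : p * ζ⁻¹ * w / p * ζ = w := by field_simp
    simp only [hFdef]
    rw [e1, Complex.normSq_mul, hn, mul_comm (T.indicator 1 w), mul_assoc, mul_one_sub]
  have hne : ∀ᵐ p : ℂ, p ≠ 0 := by
    simp [ae_iff]
  rw [h1, Measure.volume_eq_prod, lintegral_prod _ hF.aemeasurable,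
    lintegral_congr_ae (hne.mono h2), lintegral_lintegral_swap (by fun_prop)]
  rw [← lintegral_const_mul _ ?_]
  · refine lintegral_congr fun w => ?_
    rw [lintegral_const_mul _ (by fun_prop), lintegral_radial]
    by_cases hw : w ∈ T <;> simp [hw]
  · refine Measurable.indicator ?_ hT
    unfold discDensity
    exact Measurable.ite (measurableSet_lt hm measurable_const) (by fun_prop) measurable_const

/-- Polar coordinates `w = r e^{iφ}` on the disc, with `r` replaced by
`x = (1 + r²) / (1 - r²)`: hyperbolic area becomes `dx dφ / 4`. -/
lemma lintegral_disc_polar {T : Set ℂ} (hT : MeasurableSet T) :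
    ∫⁻ w, T.indicator discDensity w = ENNReal.ofReal (1 / 4) * ∫⁻ φ in Set.Ioo (-π) π,
      volume {x : ℝ | 1 < x ∧ ((√((x - 1) / (x + 1)) : ℝ) : ℂ)
        * (Real.cos φ + Real.sin φ * Complex.I) ∈ T} := by
  have hm := measurable_normSq
  have hdd : Measurable discDensity := by
    unfold discDensity
    exact Measurable.ite (measurableSet_lt hm measurable_const) (by fun_prop) measurable_const
  have hTd : Measurable (T.indicator discDensity) := hdd.indicator hT
  have hT1 : Measurable (T.indicator (1 : ℂ → ENNReal)) := measurable_one.indicator hT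
  have hpc : Measurable (fun z : ℝ × ℝ => ENNReal.ofReal z.1 •
      T.indicator discDensity (Complex.polarCoord.symm z)) := by
    simp_rw [Complex.polarCoord_symm_apply, smul_eq_mul]
    fun_prop
  rw [← Complex.lintegral_comp_polarCoord_symm, polarCoord_target, Measure.volume_eq_prod,
    ← Measure.prod_restrict, lintegral_prod_symm _ hpc.aemeasurable,
    ← lintegral_const_mul' _ _ ENNReal.ofReal_ne_top]
  refine lintegral_congr fun φ => ?_
  set e : ℂ := Real.cos φ + Real.sin φ * Complex.I with he
  have hen : Complex.normSq e = 1 := by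
    rw [he, Complex.normSq_add_mul_I, Real.cos_sq_add_sin_sq]
  have hre : ∀ r : ℝ, Complex.normSq (r * e) = r ^ 2 := by
    intro r; rw [Complex.normSq_mul, hen, Complex.normSq_ofReal, mul_one, sq]
  have hmS : MeasurableSet {x : ℝ | 1 < x ∧ ((√((x - 1) / (x + 1)) : ℝ) : ℂ) * e ∈ T} := by
    refine MeasurableSet.inter measurableSet_Ioi ?_
    exact (show Measurable fun x : ℝ => ((√((x - 1) / (x + 1)) : ℝ) : ℂ) * e by fun_prop) hT
  -- the substitution `x = (1 + r²)/(1 - r²)` maps `(0,1)` onto `(1,∞)`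
  have himg : (fun r : ℝ => (1 + r ^ 2) / (1 - r ^ 2)) '' Set.Ioo 0 1 = Set.Ioi 1 := by
    ext x
    constructor
    · rintro ⟨r, ⟨h0, h1⟩, rfl⟩
      have : 0 < 1 - r ^ 2 := by nlinarith
      rw [Set.mem_Ioi, lt_div_iff₀ this]
      nlinarith
    · intro hx
      rw [Set.mem_Ioi] at hx
      have hx1 : 0 < x + 1 := by linarith
      have hpos : 0 < (x - 1) / (x + 1) := div_pos (by linarith) hx1
      refine ⟨√((x - 1) / (x + 1)), ⟨Real.sqrt_pos.2 hpos, ?_⟩, ?_⟩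
      · rw [Real.sqrt_lt' one_pos, div_lt_iff₀ hx1]; linarith
      · simp only
        rw [Real.sq_sqrt hpos.le]
        field_simp
        ring
  have hback : ∀ r ∈ Set.Ioo (0 : ℝ) 1,
      √(((1 + r ^ 2) / (1 - r ^ 2) - 1) / ((1 + r ^ 2) / (1 - r ^ 2) + 1)) = r := by
    rintro r ⟨h0, h1⟩
    have : 0 < 1 - r ^ 2 := by nlinarith
    have h2 : ((1 + r ^ 2) / (1 - r ^ 2) - 1) / ((1 + r ^ 2) / (1 - r ^ 2) + 1) = r ^ 2 := by
      field_simp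
      ring
    rw [h2, Real.sqrt_sq h0.le]
  have hinj : Set.InjOn (fun r : ℝ => (1 + r ^ 2) / (1 - r ^ 2)) (Set.Ioo 0 1) := by
    intro r hr s hs h
    simp only at h
    rw [← hback r hr, ← hback s hs, h]
  have hder : ∀ r ∈ Set.Ioo (0 : ℝ) 1, HasDerivWithinAt (fun r : ℝ => (1 + r ^ 2) / (1 - r ^ 2))
      (4 * r / (1 - r ^ 2) ^ 2) (Set.Ioo 0 1) r := by
    rintro r ⟨h0, h1⟩
    have : (1 - r ^ 2) ≠ 0 := by nlinarith
    have h := (((hasDerivAt_pow 2 r).const_add 1).div ((hasDerivAt_pow 2 r).const_sub 1) this)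
    refine h.hasDerivWithinAt.congr_deriv ?_
    field_simp
    push_cast
    ring
  have hcv := lintegral_image_eq_lintegral_abs_deriv_mul measurableSet_Ioo hder hinj
    (fun x => T.indicator 1 (((√((x - 1) / (x + 1)) : ℝ) : ℂ) * e))
  rw [himg] at hcv
  have hvol : volume {x : ℝ | 1 < x ∧ ((√((x - 1) / (x + 1)) : ℝ) : ℂ) * e ∈ T}
      = ∫⁻ x in Set.Ioi 1, T.indicator 1 (((√((x - 1) / (x + 1)) : ℝ) : ℂ) * e) := by
    rw [← lintegral_indicator_one hmS, ← lintegral_indicator measurableSet_Ioi]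
    refine lintegral_congr fun x => ?_
    by_cases h1 : 1 < x <;>
      by_cases h2 : ((√((x - 1) / (x + 1)) : ℝ) : ℂ) * e ∈ T <;> simp [h1, h2]
  rw [hvol, hcv, ← lintegral_const_mul' _ _ ENNReal.ofReal_ne_top,
    ← lintegral_indicator measurableSet_Ioi, ← lintegral_indicator measurableSet_Ioo]
  refine lintegral_congr fun r => ?_
  have hpol : Complex.polarCoord.symm (r, φ) = r * e := by
    rw [Complex.polarCoord_symm_apply]
  by_cases hr : r ∈ Set.Ioo (0 : ℝ) 1
  · rw [Set.indicator_of_mem hr, Set.indicator_of_mem (show r ∈ Set.Ioi (0:ℝ) from hr.1), hpol,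
      hback r hr, smul_eq_mul]
    have hs : 0 < 1 - r ^ 2 := by nlinarith [hr.1, hr.2]
    by_cases ht : (r : ℂ) * e ∈ T
    · rw [Set.indicator_of_mem ht, Set.indicator_of_mem ht, discDensity, hre,
        if_pos (by linarith), Pi.one_apply, mul_one, ← ENNReal.ofReal_mul hr.1.le,
        ← ENNReal.ofReal_mul (by norm_num), abs_of_pos (by have := hr.1; positivity)]
      congr 1
      field_simp
    · rw [Set.indicator_of_notMem ht, Set.indicator_of_notMem ht]
      simp
  · rw [Set.indicator_of_notMem hr]
    by_cases h0 : r ∈ Set.Ioi (0 : ℝ)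
    · have h1 : ¬ r < 1 := fun h => hr ⟨h0, h⟩
      have hd : discDensity (r * e) = 0 := by
        rw [discDensity, if_neg]
        rw [hre]
        nlinarith
      rw [Set.indicator_of_mem h0, hpol]
      by_cases ht : (r : ℂ) * e ∈ T <;> simp [ht, hd]
    · rw [Set.indicator_of_notMem h0]

lemma normSq_pC_pos (g : SL2R) : 0 < Complex.normSq (pC g) := by
  have := normSq_sub g
  have := Complex.normSq_nonneg (qC g)
  linarith

lemma normSq_ratio (g : SL2R) {ζ : ℂ} (hζ : ‖ζ‖ = 1) :
    Complex.normSq (qC g / pC g * ζ) = Complex.normSq (qC g) / Complex.normSq (pC g) := by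
  rw [Complex.normSq_mul, Complex.normSq_div, Complex.normSq_eq_norm_sq ζ, hζ, one_pow, mul_one]

/-- The cone measure in the coordinates `x = ‖g‖² / 2` and `e^{iφ}`, the direction of `q / p`
rotated by a fixed `ζ`. For `w = q / p` one has `‖g‖² / 2 = (1 + |w|²) / (1 - |w|²)`. -/
lemma coneMeasure_polar {S : Set (ℝ × ℂ)} (hS : MeasurableSet S) {ζ : ℂ} (hζ : ‖ζ‖ = 1) :
    coneMeasure {g | 1 < fnormSq g / 2 ∧
      (fnormSq g / 2, qC g / pC g * ζ / ‖qC g / pC g * ζ‖) ∈ S}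
    = coneConst * ENNReal.ofReal (1 / 4) * ∫⁻ φ in Set.Ioo (-π) π,
      volume {x : ℝ | 1 < x ∧ (x, (Real.cos φ + Real.sin φ * Complex.I : ℂ)) ∈ S} := by
  have hm := measurable_normSq
  set T : Set ℂ := {w | (0 < Complex.normSq w ∧ Complex.normSq w < 1) ∧
    ((1 + Complex.normSq w) / (1 - Complex.normSq w), w / ‖w‖) ∈ S} with hTdef
  have hT : MeasurableSet T := by
    refine MeasurableSet.inter ((measurableSet_lt measurable_const hm).inter
      (measurableSet_lt hm measurable_const)) ?_
    exact (show Measurable fun w : ℂ =>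
      ((1 + Complex.normSq w) / (1 - Complex.normSq w), w / (‖w‖ : ℂ)) by fun_prop) hS
  have h1 : {g | 1 < fnormSq g / 2 ∧
      (fnormSq g / 2, qC g / pC g * ζ / ‖qC g / pC g * ζ‖) ∈ S} = {g | qC g / pC g * ζ ∈ T} := by
    ext g
    have hp := normSq_pC_pos g
    have hpq := normSq_sub g
    have hx : (1 + Complex.normSq (qC g / pC g * ζ)) / (1 - Complex.normSq (qC g / pC g * ζ))
        = fnormSq g / 2 := by
      have : Complex.normSq (pC g) - Complex.normSq (qC g) ≠ 0 := by rw [hpq]; norm_num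
      rw [normSq_ratio g hζ, fnormSq_eq]
      field_simp
      rw [hpq]; ring
    rw [Set.mem_ofPred_eq, Set.mem_ofPred_eq, hTdef, Set.mem_ofPred_eq, hx]
    refine and_congr_left fun _ => ?_
    rw [normSq_ratio g hζ, fnormSq_eq, div_lt_one hp]
    constructor
    · intro h
      exact ⟨div_pos (by linarith) hp, by linarith⟩
    · rintro ⟨h, -⟩
      have := (div_pos_iff_of_pos_right hp).1 h
      linarith
  rw [h1, coneMeasure_disc hT hζ, lintegral_disc_polar hT, mul_assoc]
  congr 3
  ext φ
  congr 1
  ext x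
  refine and_congr_right fun hx => ?_
  set e : ℂ := Real.cos φ + Real.sin φ * Complex.I with he
  have hen : Complex.normSq e = 1 := by
    rw [he, Complex.normSq_add_mul_I, Real.cos_sq_add_sin_sq]
  have hx1 : 0 < x + 1 := by linarith
  have hpos : 0 < (x - 1) / (x + 1) := div_pos (by linarith) hx1
  have hn : Complex.normSq (((√((x - 1) / (x + 1)) : ℝ) : ℂ) * e) = (x - 1) / (x + 1) := by
    rw [Complex.normSq_mul, hen, Complex.normSq_ofReal, Real.mul_self_sqrt hpos.le, mul_one]
  have hlt : (x - 1) / (x + 1) < 1 := by rw [div_lt_one hx1]; linarith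
  have hval : (1 + (x - 1) / (x + 1)) / (1 - (x - 1) / (x + 1)) = x := by
    have : x + 1 - (x - 1) ≠ 0 := by ring_nf; norm_num
    field_simp
    ring
  have he1 : ‖e‖ = 1 := by
    rw [Complex.norm_def, hen, Real.sqrt_one]
  have hdiv : ((√((x - 1) / (x + 1)) : ℝ) : ℂ) * e / ‖((√((x - 1) / (x + 1)) : ℝ) : ℂ) * e‖
      = e := by
    have : ((√((x - 1) / (x + 1)) : ℝ) : ℂ) ≠ 0 := by exact_mod_cast (Real.sqrt_pos.2 hpos).ne'
    rw [norm_mul, he1, mul_one, Complex.norm_real, Real.norm_of_nonneg (Real.sqrt_nonneg _),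
      mul_div_cancel_left₀ _ this]
  rw [hTdef, Set.mem_ofPred_eq, hn, hval, hdiv]
  exact and_iff_right ⟨hpos, hlt⟩

lemma coneMeasure_ne_zero : coneMeasure ≠ 0 := by
  intro h
  have h1 : coneMeasure Set.univ = 0 := by rw [h]; rfl
  rw [coneMeasure, Measure.map_apply_of_aemeasurable aemeasurable_proj MeasurableSet.univ,
    Set.preimage_univ, Measure.restrict_apply_univ] at h1
  have hne : coneU.Nonempty := by
    refine ⟨(1, 0), ?_⟩
    rw [coneU, Set.mem_ofPred_eq, det_matOf]
    norm_num
  exact (isOpen_coneU.measure_pos volume hne).ne' h1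

/-- The normalised Haar measure is `2 dx dφ` in the coordinates `x = ‖g‖² / 2` and `e^{iφ}`, the
direction of `q / p` rotated by a fixed `ζ`. Uniqueness of Haar measure gives this up to a constant
`K`; the ball `‖g‖ < Q` then has measure `2πK (Q² / 2 - 1)`, and the growth hypothesis forces
`K = 2`. -/
lemma haar_polar (μ : Measure SL2R) [μ.IsHaarMeasure]
    (hnorm : Tendsto (fun Q : ℝ => μ {g : SL2R | fnorm g < Q} / ENNReal.ofReal (Q ^ 2))
      atTop (𝓝 (ENNReal.ofReal (2 * π))))
    {S : Set (ℝ × ℂ)} (hS : MeasurableSet S) {ζ : ℂ} (hζ : ‖ζ‖ = 1) :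
    μ {g | 1 < fnormSq g / 2 ∧
      (fnormSq g / 2, qC g / pC g * ζ / ‖qC g / pC g * ζ‖) ∈ S}
    = 2 * ∫⁻ φ in Set.Ioo (-π) π,
      volume {x : ℝ | 1 < x ∧ (x, (Real.cos φ + Real.sin φ * Complex.I : ℂ)) ∈ S} := by
  set c := coneMeasure.haarScalarFactor μ with hc
  have hνμ : coneMeasure = c • μ := Measure.isMulLeftInvariant_eq_smul coneMeasure μ
  have hc0 : c ≠ 0 := by
    intro h
    rw [h, zero_smul] at hνμ
    exact coneMeasure_ne_zero hνμ
  have hμν : ∀ E, μ E = (c : ENNReal)⁻¹ * coneMeasure E := by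
    intro E
    rw [hνμ, Measure.smul_apply, ENNReal.smul_def, smul_eq_mul, ← mul_assoc,
      ENNReal.inv_mul_cancel (by exact_mod_cast hc0) ENNReal.coe_ne_top, one_mul]
  set K : ENNReal := (c : ENNReal)⁻¹ * (coneConst * ENNReal.ofReal (1 / 4)) with hK
  have key : ∀ {S : Set (ℝ × ℂ)} (_ : MeasurableSet S) {ζ : ℂ} (_ : ‖ζ‖ = 1),
      μ {g | 1 < fnormSq g / 2 ∧
      (fnormSq g / 2, qC g / pC g * ζ / ‖qC g / pC g * ζ‖) ∈ S}
    = K * ∫⁻ φ in Set.Ioo (-π) π,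
      volume {x : ℝ | 1 < x ∧ (x, (Real.cos φ + Real.sin φ * Complex.I : ℂ)) ∈ S} := by
    intro S hS ζ hζ
    rw [hμν, coneMeasure_polar hS hζ, hK]; simp only [mul_assoc]
  suffices h : K = 2 by rw [key hS hζ, h]
  -- the stabiliser `{‖g‖² = 2}` of `i` is a null set
  have hnull : μ {g : SL2R | fnormSq g / 2 ≤ 1} = 0 := by
    have h0 : {g : SL2R | fnormSq g / 2 ≤ 1} ⊆ {g | qC g / pC g * 1 ∈ ({0} : Set ℂ)} := by
      intro g hg
      have h1 := normSq_sub g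
      rw [Set.mem_ofPred_eq, fnormSq_eq] at hg
      have h2 : Complex.normSq (qC g) = 0 :=
        le_antisymm (by linarith) (Complex.normSq_nonneg _)
      rw [Complex.normSq_eq_zero] at h2
      simp [h2]
    refine measure_mono_null h0 ?_
    rw [hμν, coneMeasure_disc (measurableSet_singleton 0) (by simp),
      lintegral_indicator (measurableSet_singleton 0)]
    simp
  have hball : ∀ Q : ℝ, 2 ≤ Q → μ {g : SL2R | fnorm g < Q}
      = K * ENNReal.ofReal (2 * π * (Q ^ 2 / 2 - 1)) := by
    intro Q hQ
    have hmS : MeasurableSet {z : ℝ × ℂ | z.1 < Q ^ 2 / 2} :=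
      measurableSet_lt measurable_fst measurable_const
    have h1 := key hmS (ζ := 1) (by simp)
    have h2 : μ {g : SL2R | fnorm g < Q} = μ {g | 1 < fnormSq g / 2 ∧
      (fnormSq g / 2, qC g / pC g * 1 / (‖qC g / pC g * 1‖ : ℂ)) ∈
        {z : ℝ × ℂ | z.1 < Q ^ 2 / 2}} := by
      refine measure_congr ?_
      have h3 : ∀ᵐ g ∂μ, ¬ fnormSq g / 2 ≤ 1 := measure_eq_zero_iff_ae_notMem.1 hnull
      filter_upwards [h3] with g hg
      refine propext ?_
      show fnorm g < Q ↔ (1 < fnormSq g / 2 ∧ fnormSq g / 2 < Q ^ 2 / 2)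
      rw [fnorm, Real.sqrt_lt' (by linarith)]
      constructor
      · intro h; exact ⟨not_le.1 hg, by linarith⟩
      · rintro ⟨-, h⟩; linarith
    rw [h2, h1]
    have h4 : ∀ φ : ℝ, volume {x : ℝ | 1 < x ∧ (x, (Real.cos φ + Real.sin φ * Complex.I : ℂ)) ∈
        {z : ℝ × ℂ | z.1 < Q ^ 2 / 2}} = ENNReal.ofReal (Q ^ 2 / 2 - 1) := by
      intro φ
      exact Real.volume_Ioo
    simp_rw [h4]
    rw [setLIntegral_const, Real.volume_Ioo, ← ENNReal.ofReal_mul (by nlinarith)]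
    congr 2
    ring
  have hlim : Tendsto (fun Q : ℝ => K * ENNReal.ofReal (π - 2 * π / Q ^ 2)) atTop
      (𝓝 (K * ENNReal.ofReal π)) := by
    refine ENNReal.Tendsto.const_mul ?_ (Or.inl ?_)
    · refine ENNReal.tendsto_ofReal ?_
      have : Tendsto (fun Q : ℝ => 2 * π / Q ^ 2) atTop (𝓝 0) :=
        tendsto_const_nhds.div_atTop (tendsto_pow_atTop two_ne_zero)
      simpa using this.const_sub π
    · exact (ENNReal.ofReal_pos.2 Real.pi_pos).ne'
  have hlim2 : Tendsto (fun Q : ℝ => K * ENNReal.ofReal (π - 2 * π / Q ^ 2)) atTop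
      (𝓝 (ENNReal.ofReal (2 * π))) := by
    refine hnorm.congr' ?_
    filter_upwards [eventually_ge_atTop 2] with Q hQ
    have hQ2 : 0 < Q ^ 2 := by positivity
    rw [hball Q hQ, mul_div_assoc, ← ENNReal.ofReal_div_of_pos hQ2]
    congr 2
    field_simp
  have h2 := tendsto_nhds_unique hlim hlim2
  rw [ENNReal.ofReal_mul two_pos.le, ENNReal.ofReal_ofNat] at h2
  exact (ENNReal.mul_left_inj (ENNReal.ofReal_pos.2 Real.pi_pos).ne' ENNReal.ofReal_ne_top).1 h2

open scoped ComplexConjugate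

/-! ### Relative direction: formulas for `‖gM‖` and `θ_g - θ_{gM}` -/

lemma pC_mul (g M : SL2R) : pC (g * M) = (pC g * pC M + qC g * conj (qC M)) / 2 := by
  apply Complex.ext <;>
    simp [pC, qC, Matrix.mul_apply, Fin.sum_univ_two] <;> ring

lemma qC_mul (g M : SL2R) : qC (g * M) = (pC g * qC M + qC g * conj (pC M)) / 2 := by
  apply Complex.ext <;>
    simp [pC, qC, Matrix.mul_apply, Fin.sum_univ_two] <;> ring

lemma pC_ne_zero (g : SL2R) : pC g ≠ 0 := Complex.normSq_pos.1 (normSq_pC_pos g)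

lemma normSq_pC_eq (g : SL2R) : Complex.normSq (pC g) = 2 * (fnormSq g / 2 + 1) := by
  have := normSq_sub g
  rw [fnormSq_eq]; linarith

lemma normSq_qC_eq (g : SL2R) : Complex.normSq (qC g) = 2 * (fnormSq g / 2 - 1) := by
  have := normSq_sub g
  rw [fnormSq_eq]; linarith

lemma one_le_half_fnormSq (g : SL2R) : 1 ≤ fnormSq g / 2 := by
  have := normSq_qC_eq g
  have := Complex.normSq_nonneg (qC g)
  linarith

lemma qC_ne_zero_iff (g : SL2R) : qC g ≠ 0 ↔ 1 < fnormSq g / 2 := by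
  rw [← Complex.normSq_pos, normSq_qC_eq]
  constructor <;> intro h <;> linarith

/-- The image of `g·i` under the Cayley transform is `q̄ / p`; hence `θ_g = -arg (p q)` modulo
`2π`. -/
lemma cayley_smul_I (g : SL2R) :
    (((g • UpperHalfPlane.I : UpperHalfPlane) : ℂ) - Complex.I)
      / (((g • UpperHalfPlane.I : UpperHalfPlane) : ℂ) + Complex.I) = conj (qC g) / pC g := by
  have hden : (((g : Matrix (Fin 2) (Fin 2) ℝ) 1 0 : ℝ) : ℂ) * Complex.I
      + (((g : Matrix (Fin 2) (Fin 2) ℝ) 1 1 : ℝ) : ℂ) ≠ 0 := by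
    intro h
    have h1 := congrArg Complex.re h
    have h2 := congrArg Complex.im h
    simp at h1 h2
    have := g.det_coe
    rw [Matrix.det_fin_two, h1, h2] at this
    simp at this
  have hp := pC_ne_zero g
  have hadd : ((g • UpperHalfPlane.I : UpperHalfPlane) : ℂ) + Complex.I ≠ 0 := by
    intro h
    have h1 := congrArg Complex.im h
    have h2 := (g • UpperHalfPlane.I).im_pos
    simp at h1
    linarith
  have hz : ((g • UpperHalfPlane.I : UpperHalfPlane) : ℂ)
      * ((((g : Matrix (Fin 2) (Fin 2) ℝ) 1 0 : ℝ) : ℂ) * Complex.I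
        + (((g : Matrix (Fin 2) (Fin 2) ℝ) 1 1 : ℝ) : ℂ))
      = (((g : Matrix (Fin 2) (Fin 2) ℝ) 0 0 : ℝ) : ℂ) * Complex.I
        + (((g : Matrix (Fin 2) (Fin 2) ℝ) 0 1 : ℝ) : ℂ) := by
    rw [UpperHalfPlane.coe_specialLinearGroup_apply, UpperHalfPlane.coe_I]
    simp only [Algebra.algebraMap_self, RingHom.id_apply]
    exact div_mul_cancel₀ _ hden
  have hq : conj (qC g) = (((g : Matrix (Fin 2) (Fin 2) ℝ) 0 0 : ℝ) : ℂ)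
      - (((g : Matrix (Fin 2) (Fin 2) ℝ) 1 1 : ℝ) : ℂ)
      - ((((g : Matrix (Fin 2) (Fin 2) ℝ) 0 1 : ℝ) : ℂ)
      + (((g : Matrix (Fin 2) (Fin 2) ℝ) 1 0 : ℝ) : ℂ)) * Complex.I := by
    apply Complex.ext <;> simp [qC]
  have hpe : pC g = (((g : Matrix (Fin 2) (Fin 2) ℝ) 0 0 : ℝ) : ℂ)
      + (((g : Matrix (Fin 2) (Fin 2) ℝ) 1 1 : ℝ) : ℂ)
      + ((((g : Matrix (Fin 2) (Fin 2) ℝ) 1 0 : ℝ) : ℂ)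
      - (((g : Matrix (Fin 2) (Fin 2) ℝ) 0 1 : ℝ) : ℂ)) * Complex.I := by
    apply Complex.ext <;> simp [pC]
  rw [div_eq_div_iff hadd hp, hq, hpe]
  linear_combination 2 * hz
    + 2 * (((g : Matrix (Fin 2) (Fin 2) ℝ) 0 1 : ℝ) : ℂ) * Complex.I_sq

lemma theta_eq (g : SL2R) : theta g = Complex.arg (conj (qC g) / pC g) := by
  rw [theta, cayley_smul_I]

lemma smul_I_ne_iff (g : SL2R) :
    g • UpperHalfPlane.I ≠ UpperHalfPlane.I ↔ 1 < fnormSq g / 2 := by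
  rw [← qC_ne_zero_iff, not_iff_not]
  have h := cayley_smul_I g
  constructor
  · intro h1
    rw [h1, UpperHalfPlane.coe_I, sub_self, zero_div, eq_comm, div_eq_zero_iff] at h
    rcases h with h | h
    · simpa using h
    · exact absurd h (pC_ne_zero g)
  · intro h1
    rw [h1, map_zero, zero_div, div_eq_zero_iff] at h
    rcases h with h | h
    · exact UpperHalfPlane.ext (by rw [sub_eq_zero.1 h, UpperHalfPlane.coe_I])
    · have h3 := congrArg Complex.im h
      have h2 := (g • UpperHalfPlane.I).im_pos
      simp at h3
      linarith

/-- The conjugate of the unit complex number in the direction of `p q` for `M`. Rotating by it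
moves the origin of the angular coordinate so that the formulas for `gM` involve only `‖g‖`, `‖M‖`
and the relative direction. -/
def phase (M : SL2R) : ℂ := conj (pC M * qC M) / ‖pC M * qC M‖

lemma norm_phase {M : SL2R} (hM : 1 < fnormSq M / 2) : ‖phase M‖ = 1 := by
  have h : ‖pC M * qC M‖ ≠ 0 :=
    norm_ne_zero_iff.2 (mul_ne_zero (pC_ne_zero M) ((qC_ne_zero_iff M).2 hM))
  rw [phase, norm_div, Complex.norm_conj, Complex.norm_real, norm_norm, div_self h]

lemma norm_pC_mul_qC (g : SL2R) : ‖pC g * qC g‖ = 2 * √((fnormSq g / 2) ^ 2 - 1) := by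
  have h := one_le_half_fnormSq g
  rw [Complex.norm_def, Complex.normSq_mul, normSq_pC_eq, normSq_qC_eq,
    show 2 * (fnormSq g / 2 + 1) * (2 * (fnormSq g / 2 - 1))
      = 2 ^ 2 * ((fnormSq g / 2) ^ 2 - 1) by ring, Real.sqrt_mul (by norm_num),
    Real.sqrt_sq two_pos.le]

/-- The relative direction of `g` and `M`: the unit complex number `e^{iφ}` in the direction of
`q / p` (for `g`) rotated by `phase M`. It is the junk value `0` when `q = 0`. -/
def relDir (M g : SL2R) : ℂ := qC g / pC g * phase M / ‖qC g / pC g * phase M‖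

/-- The relation through which `relDir` enters the product formulas, free of divisions. -/
lemma relDir_spec {M g : SL2R} (hM : 1 < fnormSq M / 2) (hg : 1 < fnormSq g / 2) :
    qC g * conj (pC g) * conj (pC M * qC M)
    = ((4 * √((fnormSq g / 2) ^ 2 - 1) * √((fnormSq M / 2) ^ 2 - 1) : ℝ) : ℂ) * relDir M g := by
  have hp := pC_ne_zero g
  have hq := (qC_ne_zero_iff g).2 hg
  have hPQ : ‖pC M * qC M‖ ≠ 0 :=
    norm_ne_zero_iff.2 (mul_ne_zero (pC_ne_zero M) ((qC_ne_zero_iff M).2 hM))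
  have hz : ‖phase M‖ = 1 := norm_phase hM
  have hpn : (‖pC g‖ : ℂ) ≠ 0 := by exact_mod_cast norm_ne_zero_iff.2 hp
  have hqn : (‖qC g‖ : ℂ) ≠ 0 := by exact_mod_cast norm_ne_zero_iff.2 hq
  have h1 : conj (pC M * qC M) = ‖pC M * qC M‖ * phase M := by
    rw [phase, mul_div_cancel₀]
    exact_mod_cast hPQ
  have h2 : conj (pC g) = (‖pC g‖ : ℂ) ^ 2 / pC g := by
    rw [eq_div_iff hp, mul_comm, Complex.mul_conj, Complex.normSq_eq_norm_sq]
    push_cast; ring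
  have h3 : ((4 * √((fnormSq g / 2) ^ 2 - 1) * √((fnormSq M / 2) ^ 2 - 1) : ℝ) : ℂ)
      = (‖pC g‖ : ℂ) * ‖qC g‖ * ‖pC M * qC M‖ := by
    have := norm_pC_mul_qC g
    rw [norm_mul] at this
    rw [norm_pC_mul_qC M, ← Complex.ofReal_mul, this]
    push_cast; ring
  have hw : ‖qC g / pC g * phase M‖ = ‖qC g‖ / ‖pC g‖ := by
    rw [norm_mul, norm_div, hz, mul_one]
  rw [h1, h2, h3, relDir, hw]
  push_cast
  field_simp

/-- The hyperbolic law of cosines: with `x = ‖g‖² / 2 = cosh d(i, g·i)`,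
`A = ‖M‖² / 2 = cosh ℓ(M)` and relative direction `e^{iφ}`,
`‖gM‖² / 2 = x A + √(x² - 1) √(A² - 1) cos φ`. -/
lemma fnormSq_mul {M g : SL2R} (hM : 1 < fnormSq M / 2) (hg : 1 < fnormSq g / 2) :
    fnormSq (g * M) / 2 = fnormSq g / 2 * (fnormSq M / 2)
    + √((fnormSq g / 2) ^ 2 - 1) * √((fnormSq M / 2) ^ 2 - 1) * (relDir M g).re := by
  have h := congrArg Complex.re (relDir_spec hM hg)
  rw [Complex.re_ofReal_mul] at h
  have h1 : fnormSq (g * M) = (fnormSq g * fnormSq M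
      + (qC g * conj (pC g) * conj (pC M * qC M)).re) / 2 := by
    rw [fnormSq_eq g, fnormSq_eq M, fnormSq_eq (g * M), pC_mul, qC_mul]
    simp only [Complex.normSq_apply, Complex.div_re, Complex.div_im, Complex.mul_re,
      Complex.mul_im, Complex.add_re, Complex.add_im, Complex.conj_re, Complex.conj_im,
      Complex.re_ofNat, Complex.im_ofNat]
    ring
  rw [h1, h]
  ring

/-- The ratio of `p q` for `gM` to `p q` for `g`. Since `θ_g = -arg (p q)`, the argument of this
ratio is `θ_g - θ_{gM}`. -/
lemma pq_mul {M g : SL2R} (hM : 1 < fnormSq M / 2) (hg : 1 < fnormSq g / 2) :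
    pC (g * M) * qC (g * M) * (√((fnormSq g / 2) ^ 2 - 1) : ℝ)
    = pC g * qC g * (((√((fnormSq g / 2) ^ 2 - 1) * (fnormSq M / 2)
        + fnormSq g / 2 * √((fnormSq M / 2) ^ 2 - 1) * (relDir M g).re : ℝ) : ℂ)
      - ((√((fnormSq M / 2) ^ 2 - 1) * (relDir M g).im : ℝ) : ℂ) * Complex.I) := by
  have hk := relDir_spec hM hg
  have hkc := congrArg conj hk
  simp only [map_mul, Complex.conj_conj, Complex.conj_ofReal] at hkc
  have hP : pC M * conj (pC M) = ((2 * (fnormSq M / 2 + 1) : ℝ) : ℂ) := by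
    rw [Complex.mul_conj, normSq_pC_eq]
  have hQ : qC M * conj (qC M) = ((2 * (fnormSq M / 2 - 1) : ℝ) : ℂ) := by
    rw [Complex.mul_conj, normSq_qC_eq]
  have hp : pC g * conj (pC g) = ((2 * (fnormSq g / 2 + 1) : ℝ) : ℂ) := by
    rw [Complex.mul_conj, normSq_pC_eq]
  have hq : qC g * conj (qC g) = ((2 * (fnormSq g / 2 - 1) : ℝ) : ℂ) := by
    rw [Complex.mul_conj, normSq_qC_eq]
  have hy : (√((fnormSq g / 2) ^ 2 - 1) : ℂ) ^ 2 = ((fnormSq g / 2) ^ 2 - 1 : ℝ) := by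
    rw [← Complex.ofReal_pow, Real.sq_sqrt (by nlinarith)]
  have he : relDir M g = ((relDir M g).re : ℂ) + ((relDir M g).im : ℂ) * Complex.I :=
    (Complex.re_add_im _).symm
  have hec : conj (relDir M g) = ((relDir M g).re : ℂ) - ((relDir M g).im : ℂ) * Complex.I := by
    apply Complex.ext <;> simp
  rw [map_mul] at hk
  rw [hec] at hkc
  rw [he] at hk
  set x := fnormSq g / 2
  set A := fnormSq M / 2
  set y := √(x ^ 2 - 1)
  set B := √(A ^ 2 - 1)
  set c := (relDir M g).re
  set s := (relDir M g).im
  have hx1 : ((x - 1 : ℝ) : ℂ) ≠ 0 := by exact_mod_cast (by linarith : x - 1 ≠ 0)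
  have hx2 : ((x + 1 : ℝ) : ℂ) ≠ 0 := by exact_mod_cast (by linarith : x + 1 ≠ 0)
  push_cast at *
  have e1 : pC g ^ 2 * (pC M * qC M) * y
      = pC g * qC g * (2 * (x + 1) * B * (c - s * Complex.I)) := by
    apply mul_left_cancel₀ hx1
    linear_combination (-(pC g ^ 2 * pC M * qC M * y) / 2) * hq
      + (pC g * qC g * y / 2) * hkc + 2 * pC g * qC g * B * (c - s * Complex.I) * hy
  have e2 : qC g ^ 2 * (conj (pC M) * conj (qC M)) * y
      = pC g * qC g * (2 * (x - 1) * B * (c + s * Complex.I)) := by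
    apply mul_left_cancel₀ hx2
    linear_combination (-(qC g ^ 2 * conj (pC M) * conj (qC M) * y) / 2) * hp
      + (pC g * qC g * y / 2) * hk + 2 * pC g * qC g * B * (c + s * Complex.I) * hy
  rw [pC_mul, qC_mul]
  linear_combination e1 / 4 + e2 / 4 + (pC g * qC g * y / 4) * hP + (pC g * qC g * y / 4) * hQ

/-- The angular condition in terms of norms and relative direction. The argument of the ratio in
`pq_mul` has tangent `-√(A² - 1) sin φ / R`, with `R` the bracket on the right-hand side; for
`ε < π / 2` the condition includes `R > 0`. -/
lemma angDist_lt_iff {M g : SL2R} (hM : 1 < fnormSq M / 2) (hg : 1 < fnormSq g / 2)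
    (hgM : 1 < fnormSq (g * M) / 2) {ε : ℝ} (h0 : 0 < ε) (h1 : ε < π / 2) :
    angDist (theta g) (theta (g * M)) < ε ↔
      √((fnormSq M / 2) ^ 2 - 1) * |(relDir M g).im| <
        Real.tan ε * (√((fnormSq g / 2) ^ 2 - 1) * (fnormSq M / 2)
        + fnormSq g / 2 * √((fnormSq M / 2) ^ 2 - 1) * (relDir M g).re) := by
  have hp := pC_ne_zero g
  have hq := (qC_ne_zero_iff g).2 hg
  have hp' := pC_ne_zero (g * M)
  have hq' := (qC_ne_zero_iff (g * M)).2 hgM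
  have key := pq_mul hM hg
  set x := fnormSq g / 2
  set A := fnormSq M / 2
  have hy : 0 < √(x ^ 2 - 1) := Real.sqrt_pos.2 (by nlinarith)
  set y := √(x ^ 2 - 1)
  set B := √(A ^ 2 - 1)
  set c := (relDir M g).re
  set s := (relDir M g).im
  set R : ℝ := y * A + x * B * c
  set W : ℂ := (R : ℂ) - ((B * s : ℝ) : ℂ) * Complex.I with hW
  have hWre : W.re = R := by simp [hW]
  have hWim : W.im = - (B * s) := by simp [hW]
  have hB : 0 ≤ B := Real.sqrt_nonneg _
  have hW0 : W ≠ 0 := by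
    intro h
    rw [h, mul_zero] at key
    have : (y : ℂ) ≠ 0 := by exact_mod_cast hy.ne'
    exact mul_ne_zero (mul_ne_zero hp' hq') this key
  have harg : angDist (theta g) (theta (g * M)) = |Complex.arg W| := by
    rw [angDist, theta_eq, theta_eq, Real.Angle.coe_sub, ← Complex.arg_div_coe_angle
      (div_ne_zero (by simpa using hq) hp) (div_ne_zero (by simpa using hq') hp'),
      Complex.arg_coe_angle_toReal_eq_arg]
    have hr : 0 < Complex.normSq (qC g) / (Complex.normSq (qC (g * M)) * y) :=
      div_pos (Complex.normSq_pos.2 hq) (mul_pos (Complex.normSq_pos.2 hq') hy)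
    rw [← Complex.arg_real_mul W hr]
    congr 2
    have hc : conj (qC g) ≠ 0 := by simpa using hq
    have hc' : conj (qC (g * M)) ≠ 0 := by simpa using hq'
    have hyc : (y : ℂ) ≠ 0 := by exact_mod_cast hy.ne'
    push_cast
    rw [← Complex.mul_conj, ← Complex.mul_conj]
    field_simp
    linear_combination key
  have htan : 0 < Real.tan ε := Real.tan_pos_of_pos_of_lt_pi_div_two h0 h1
  rw [harg]
  have hequiv : 0 < R → (|Complex.arg W| < ε ↔ B * |s| < Real.tan ε * R) := by
    intro hR
    have h2 : |Complex.arg W| < π / 2 :=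
      Complex.abs_arg_lt_pi_div_two_iff.2 (Or.inl (by rwa [hWre]))
    have h3 : Real.tan |Complex.arg W| = B * |s| / R := by
      have h4 : Real.tan |Complex.arg W| = |Real.tan (Complex.arg W)| := by
        rcases abs_cases (Complex.arg W) with ⟨h, h'⟩ | ⟨h, h'⟩
        · rw [h, abs_of_nonneg]
          exact Real.tan_nonneg_of_nonneg_of_le_pi_div_two h' (by rw [← h]; exact h2.le)
        · rw [h, Real.tan_neg, abs_of_nonpos]
          exact Real.tan_nonpos_of_nonpos_of_neg_pi_div_two_le h'.le (by linarith)
      rw [h4, Complex.tan_arg, hWre, hWim, abs_div, abs_neg, abs_mul, abs_of_nonneg hB,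
        abs_of_pos hR]
    rw [← div_lt_iff₀ hR, ← h3]
    refine (Real.strictMonoOn_tan.lt_iff_lt ⟨?_, h2⟩ ⟨?_, h1⟩).symm
    · linarith [abs_nonneg (Complex.arg W), Real.pi_pos]
    · linarith [Real.pi_pos]
  constructor
  · intro h
    have h2 : |Complex.arg W| < π / 2 := h.trans h1
    have hR : 0 < R := by
      rcases Complex.abs_arg_lt_pi_div_two_iff.1 h2 with h3 | h3
      · rwa [hWre] at h3
      · exact absurd h3 hW0
    exact (hequiv hR).1 h
  · intro h
    have hR : 0 < R := by
      have : 0 ≤ B * |s| := mul_nonneg hB (abs_nonneg s)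
      exact (pos_iff_pos_of_mul_pos (this.trans_lt h)).1 htan
    exact (hequiv hR).2 h

/-! ### The main term -/

/-- The limiting value of `(‖gM‖ / ‖g‖)²` as `‖g‖ → ∞`, where `ℓ(M) = l` and the relative direction
is `e^{iφ}`. -/
def stretch (l φ : ℝ) : ℝ := Real.cosh l + Real.sinh l * Real.cos φ

/-- The limiting density of admissible radii in the direction `φ`. With `X = Q² / 2`, the radii
`x = ‖g‖² / 2` allowed in `RM` are, up to bounded error, those with
`X sinh l |sin φ| / (ξ stretch) < x < X min (1, 1 / stretch)`. -/
def radialLength (ξ l φ : ℝ) : ℝ :=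
  max 0 (min 1 (stretch l φ)⁻¹ - Real.sinh l * |Real.sin φ| / (ξ * stretch l φ))

lemma stretch_pos (l φ : ℝ) : 0 < stretch l φ := by
  have h1 : |Real.sinh l * Real.cos φ| < Real.cosh l := by
    apply abs_lt_of_sq_lt_sq _ (Real.cosh_pos l).le
    have := Real.cosh_sq l
    have := Real.cos_sq_le_one φ
    nlinarith [sq_nonneg (Real.sinh l)]
  have := (abs_lt.1 h1).1
  unfold stretch
  linarith

lemma continuous_stretch (l : ℝ) : Continuous (stretch l) := by
  unfold stretch; fun_prop

lemma continuous_stretch_inv (l : ℝ) : Continuous fun φ => (stretch l φ)⁻¹ :=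
  (continuous_stretch l).inv₀ fun φ => (stretch_pos l φ).ne'

lemma continuous_radialLength {ξ : ℝ} (hξ : 0 < ξ) (l : ℝ) : Continuous (radialLength ξ l) := by
  have h := continuous_stretch_inv l
  have h' := continuous_stretch l
  unfold radialLength
  refine continuous_const.max ((continuous_const.min h).sub (Continuous.div (by fun_prop)
    (by fun_prop) fun φ => (mul_pos hξ (stretch_pos l φ)).ne'))

lemma stretch_neg (l φ : ℝ) : stretch l (-φ) = stretch l φ := by
  simp [stretch]

lemma radialLength_neg (ξ l φ : ℝ) : radialLength ξ l (-φ) = radialLength ξ l φ := by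
  simp [radialLength, stretch_neg]

/-- The Poisson kernel has mean one; the primitive comes from
`d/dφ arctan (sinh l sin φ / (cosh l + 1 + sinh l cos φ)) = (1 - 1 / stretch l φ) / 2`. -/
lemma integral_stretch_inv (l : ℝ) : ∫ φ in (-π)..π, (stretch l φ)⁻¹ = 2 * π := by
  have hder : ∀ φ : ℝ, HasDerivAt (fun φ => φ - 2 * Real.arctan (Real.sinh l * Real.sin φ
      / (stretch l φ + 1))) (stretch l φ)⁻¹ φ := by
    intro φ
    have hu := stretch_pos l φ
    have hD : stretch l φ + 1 ≠ 0 := by linarith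
    have h1 : HasDerivAt (fun φ => Real.sinh l * Real.sin φ) (Real.sinh l * Real.cos φ) φ :=
      (Real.hasDerivAt_sin φ).const_mul _
    have h2 : HasDerivAt (fun φ => stretch l φ + 1) (Real.sinh l * (-Real.sin φ)) φ :=
      (((Real.hasDerivAt_cos φ).const_mul _).const_add _).add_const _
    have h3 := (hasDerivAt_id φ).sub (((h1.div h2 hD).arctan).const_mul 2)
    refine h3.congr_deriv ?_
    have hA : Real.cosh l + 1 ≠ 0 := by linarith [Real.cosh_pos l]
    have hden : (stretch l φ + 1) ^ 2 + (Real.sinh l * Real.sin φ) ^ 2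
        = 2 * (Real.cosh l + 1) * stretch l φ := by
      have := Real.cosh_sq l
      have := Real.sin_sq_add_cos_sq φ
      unfold stretch
      linear_combination (Real.sinh l ^ 2) * Real.sin_sq_add_cos_sq φ - Real.cosh_sq l
    have hnum : Real.sinh l * Real.cos φ * (stretch l φ + 1)
        - Real.sinh l * Real.sin φ * (Real.sinh l * -Real.sin φ)
        = (Real.cosh l + 1) * (stretch l φ - 1) := by
      unfold stretch
      linear_combination (Real.sinh l ^ 2) * Real.sin_sq_add_cos_sq φ - Real.cosh_sq l
    have h5 : 1 + (Real.sinh l * Real.sin φ / (stretch l φ + 1)) ^ 2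
        = 2 * (Real.cosh l + 1) * stretch l φ / (stretch l φ + 1) ^ 2 := by
      rw [← hden]; field_simp
    simp only [Pi.div_apply]
    rw [hnum, h5]
    field_simp
    ring
  rw [intervalIntegral.integral_eq_sub_of_hasDerivAt (fun φ _ => hder φ)
    ((continuous_stretch_inv l).intervalIntegrable _ _)]
  simp
  ring

/-- Integrating `v / ζ²` over the `ζ ≤ ξ` for which `v ≤ ζ m`. -/
lemma lintegral_threshold {v m ξ : ℝ} (hv : 0 < v) (hm : 0 < m) (hξ : 0 < ξ) :
    ∫⁻ ζ in Set.Ioc 0 ξ, ENNReal.ofReal (1 / ζ ^ 2) * (ENNReal.ofReal v *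
      if v ≤ ζ * m then 1 else 0) = ENNReal.ofReal (max 0 (m - v / ξ)) := by
  set t := v / m with ht
  have htp : 0 < t := div_pos hv hm
  have h1 : ∀ ζ ∈ Set.Ioc 0 ξ, ENNReal.ofReal (1 / ζ ^ 2) * (ENNReal.ofReal v *
      if v ≤ ζ * m then 1 else 0)
      = (Set.Icc t ξ).indicator (fun ζ => ENNReal.ofReal (v / ζ ^ 2)) ζ := by
    intro ζ hζ
    have : v ≤ ζ * m ↔ ζ ∈ Set.Icc t ξ := by
      rw [Set.mem_Icc, ht, div_le_iff₀ hm]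
      exact ⟨fun h => ⟨h, hζ.2⟩, fun h => h.1⟩
    by_cases h : v ≤ ζ * m
    · rw [if_pos h, Set.indicator_of_mem (this.1 h), mul_one, ← ENNReal.ofReal_mul (by positivity)]
      congr 1; ring
    · rw [if_neg h, Set.indicator_of_notMem (fun h' => h (this.2 h')), mul_zero, mul_zero]
  rw [setLIntegral_congr_fun measurableSet_Ioc h1, lintegral_indicator measurableSet_Icc,
    Measure.restrict_restrict measurableSet_Icc]
  have h2 : Set.Icc t ξ ∩ Set.Ioc 0 ξ = Set.Icc t ξ :=
    Set.inter_eq_left.2 fun x hx => ⟨htp.trans_le hx.1, hx.2⟩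
  rw [h2]
  rcases le_or_gt t ξ with h | h
  · have hpos : ∀ x ∈ Set.uIcc t ξ, x ≠ 0 := by
      intro x hx
      rw [Set.uIcc_of_le h] at hx
      exact (htp.trans_le hx.1).ne'
    have hcont : ContinuousOn (fun ζ : ℝ => v / ζ ^ 2) (Set.uIcc t ξ) :=
      ContinuousOn.div (by fun_prop) (by fun_prop) fun x hx => pow_ne_zero 2 (hpos x hx)
    rw [← restrict_Ioc_eq_restrict_Icc, ← ofReal_integral_eq_lintegral_ofReal]
    · rw [← intervalIntegral.integral_of_le h,
        intervalIntegral.integral_eq_sub_of_hasDerivAt (f := fun ζ => - v / ζ)]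
      · congr 1
        have : v / ξ ≤ m := by
          rw [div_le_iff₀ hξ]; rw [ht, div_le_iff₀ hm] at h; linarith
        rw [max_eq_right (by linarith), ht]
        field_simp
        ring
      · intro x hx
        have := (hasDerivAt_const x (-v)).div (hasDerivAt_id x) (hpos x hx)
        refine this.congr_deriv ?_
        simp
      · exact hcont.intervalIntegrable
    · exact (intervalIntegrable_iff_integrableOn_Ioc_of_le h).1 hcont.intervalIntegrable
    · exact Eventually.of_forall fun x => by positivity
  · have : m ≤ v / ξ := by
      rw [le_div_iff₀ hξ]; rw [ht, lt_div_iff₀ hm] at h; linarith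
    rw [Set.Icc_eq_empty (by linarith), max_eq_left (by linarith)]
    simp

/-- The condition `sinh l |sin φ| ≤ ζ` in terms of `w = log (stretch l φ)`. At `-w` it reads
`sinh l |sin φ| / stretch l φ ≤ ζ`. -/
def sineBound (l ζ w : ℝ) : Prop :=
  2 * Real.cosh l * Real.exp w - Real.exp w ^ 2 - 1 ≤ ζ ^ 2

lemma sineBound_of_sinh_le {l ζ : ℝ} (hl : 0 < l) (h : Real.sinh l ≤ ζ) (w : ℝ) :
    sineBound l ζ w := by
  have := Real.cosh_sq l
  have := Real.sinh_pos_iff.2 hl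
  unfold sineBound
  nlinarith [sq_nonneg (Real.exp w - Real.cosh l)]

lemma sineBound_iff {l ζ : ℝ} (hζ : 0 < ζ) (h : ζ < Real.sinh l) (w : ℝ) :
    sineBound l ζ w ↔ Real.log (Real.cosh l + √(Real.sinh l ^ 2 - ζ ^ 2)) ≤ w ∨
      w ≤ Real.log (Real.cosh l - √(Real.sinh l ^ 2 - ζ ^ 2)) := by
  have hc := Real.cosh_sq l
  have hcp := Real.cosh_pos l
  have hr : √(Real.sinh l ^ 2 - ζ ^ 2) ^ 2 = Real.sinh l ^ 2 - ζ ^ 2 :=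
    Real.sq_sqrt (by nlinarith)
  have hr0 := Real.sqrt_nonneg (Real.sinh l ^ 2 - ζ ^ 2)
  set r := √(Real.sinh l ^ 2 - ζ ^ 2)
  have hlt : r < Real.cosh l := by nlinarith
  rw [Real.log_le_iff_le_exp (by linarith), Real.le_log_iff_exp_le (by linarith)]
  unfold sineBound
  constructor
  · intro h1
    have : r ^ 2 ≤ (Real.exp w - Real.cosh l) ^ 2 := by nlinarith
    have h2 := sq_le_sq.1 this
    rw [abs_of_nonneg hr0] at h2
    rcases le_abs.1 h2 with h3 | h3
    · left; linarith
    · right; linarith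
  · rintro (h1 | h1) <;> nlinarith

/-- The three cases in the definition of `f_ζ`: the `w ∈ (-l, l)` satisfying the quadratic
inequality at both `w` and `-w` form the whole interval, or three intervals, or two. -/
lemma volume_sineBound {l ζ : ℝ} (hl : 0 < l) (hζ : 0 < ζ) :
    0 ≤ ζ ^ 2 * fxi ζ l ∧ volume ({w | sineBound l ζ w ∧ sineBound l ζ (-w)} ∩ Set.Ioo (-l) l)
      = ENNReal.ofReal (ζ ^ 2 * fxi ζ l) := by
  have hfx : ∀ x, ζ ^ 2 * (2 / ζ ^ 2 * x) = 2 * x := fun x => by field_simp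
  rcases le_or_gt (Real.sinh l) ζ with h | h
  · rw [fxi, if_pos h, hfx]
    have : {w | sineBound l ζ w ∧ sineBound l ζ (-w)} ∩ Set.Ioo (-l) l = Set.Ioo (-l) l :=
      Set.inter_eq_right.2 fun w _ => ⟨sineBound_of_sinh_le hl h _, sineBound_of_sinh_le hl h _⟩
    rw [this, Real.volume_Ioo]
    refine ⟨by linarith, ?_⟩
    congr 1; ring
  rw [fxi, if_neg (not_le.2 h)]
  simp only [sineBound_iff hζ h]
  have hc := Real.cosh_sq l
  have hcp := Real.cosh_pos l
  have hr : √(Real.sinh l ^ 2 - ζ ^ 2) ^ 2 = Real.sinh l ^ 2 - ζ ^ 2 :=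
    Real.sq_sqrt (by nlinarith)
  have hr0 := Real.sqrt_nonneg (Real.sinh l ^ 2 - ζ ^ 2)
  set r := √(Real.sinh l ^ 2 - ζ ^ 2) with hrdef
  have hlt : r < Real.cosh l := by nlinarith
  have hone : 1 < Real.cosh l := Real.one_lt_cosh.2 hl.ne'
  have hab : Real.log (Real.cosh l + r) + Real.log (Real.cosh l - r) = Real.log (1 + ζ ^ 2) := by
    rw [← Real.log_mul (by linarith) (by linarith)]
    congr 1; linear_combination hc - hr
  have hpos : 0 < Real.log (1 + ζ ^ 2) := Real.log_pos (by nlinarith)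
  have hal : Real.log (Real.cosh l + r) ≤ l := by
    rw [Real.log_le_iff_le_exp (by linarith), ← Real.cosh_add_sinh]
    have := Real.sinh_pos_iff.2 hl
    nlinarith
  have ha0 : 0 < Real.log (Real.cosh l + r) := Real.log_pos (by linarith)
  have hbiff : 2 * Real.sinh (l / 2) ≤ ζ ↔ 0 ≤ Real.log (Real.cosh l - r) := by
    have h1 : Real.cosh l = 1 + 2 * Real.sinh (l / 2) ^ 2 := by
      have := Real.cosh_two_mul (l / 2)
      rw [mul_div_cancel₀ _ two_ne_zero] at this
      linarith [Real.cosh_sq (l / 2)]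
    have h2 := Real.sinh_pos_iff.2 (half_pos hl)
    rw [Real.le_log_iff_exp_le (by linarith), Real.exp_zero]
    constructor
    · intro h3
      have : r ^ 2 ≤ (Real.cosh l - 1) ^ 2 := by nlinarith
      linarith [le_of_sq_le_sq this (by linarith)]
    · intro h3
      have : r ^ 2 ≤ (Real.cosh l - 1) ^ 2 := by nlinarith
      apply le_of_sq_le_sq _ hζ.le
      nlinarith
  have hba : Real.log (Real.cosh l - r) < Real.log (Real.cosh l + r) := by
    have : 0 < r := Real.sqrt_pos.2 (by nlinarith)
    exact Real.log_lt_log (by linarith) (by linarith)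
  set a := Real.log (Real.cosh l + r)
  set b := Real.log (Real.cosh l - r)
  rw [← hab]
  by_cases hb : 2 * Real.sinh (l / 2) ≤ ζ
  · rw [if_pos hb, hfx]
    have hb' := hbiff.1 hb
    have hset : {w | (a ≤ w ∨ w ≤ b) ∧ (a ≤ -w ∨ -w ≤ b)} ∩ Set.Ioo (-l) l
        = Set.Ico a l ∪ Set.Ioc (-l) (-a) ∪ Set.Icc (-b) b := by
      ext w
      simp only [Set.mem_inter_iff, Set.mem_ofPred_eq, Set.mem_Ioo, Set.mem_union, Set.mem_Ico,
        Set.mem_Ioc, Set.mem_Icc]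
      constructor
      · rintro ⟨⟨h1 | h1, h2 | h2⟩, h3, h4⟩
        · exact Or.inl (Or.inl ⟨h1, h4⟩)
        · exact Or.inl (Or.inl ⟨h1, h4⟩)
        · exact Or.inl (Or.inr ⟨h3, by linarith⟩)
        · exact Or.inr ⟨by linarith, h1⟩
      · rintro ((⟨h1, h2⟩ | ⟨h1, h2⟩) | ⟨h1, h2⟩)
        · exact ⟨⟨Or.inl h1, Or.inr (by linarith)⟩, by linarith, h2⟩
        · exact ⟨⟨Or.inr (by linarith), Or.inl (by linarith)⟩, h1, by linarith⟩
        · exact ⟨⟨Or.inr h2, Or.inr (by linarith)⟩, by linarith, by linarith⟩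
    have hd : Disjoint (Set.Ico a l) (Set.Ioc (-l) (-a)) :=
      Set.disjoint_left.2 fun x hx hx' => by linarith [hx.1, hx'.2]
    have hd' : Disjoint (Set.Ico a l ∪ Set.Ioc (-l) (-a)) (Set.Icc (-b) b) := by
      refine Set.disjoint_left.2 fun x hx hx' => ?_
      rcases hx with hx | hx
      · linarith [hx.1, hx'.2]
      · linarith [hx.2, hx'.1]
    rw [hset, measure_union hd' measurableSet_Icc, measure_union hd measurableSet_Ioc,
      Real.volume_Ico, Real.volume_Ioc, Real.volume_Icc,
      ← ENNReal.ofReal_add (by linarith) (by linarith),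
      ← ENNReal.ofReal_add (by linarith) (by linarith)]
    refine ⟨by linarith, ?_⟩
    congr 1; ring
  · rw [if_neg hb, hfx]
    have hb' : b < 0 := not_le.1 fun h => hb (hbiff.2 h)
    have hset : {w | (a ≤ w ∨ w ≤ b) ∧ (a ≤ -w ∨ -w ≤ b)} ∩ Set.Ioo (-l) l
        = Set.Ico a l ∪ Set.Ioc (-l) (-a) := by
      ext w
      simp only [Set.mem_inter_iff, Set.mem_ofPred_eq, Set.mem_Ioo, Set.mem_union, Set.mem_Ico,
        Set.mem_Ioc]
      constructor
      · rintro ⟨⟨h1 | h1, h2 | h2⟩, h3, h4⟩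
        · exact Or.inl ⟨h1, h4⟩
        · exact Or.inl ⟨h1, h4⟩
        · exact Or.inr ⟨h3, by linarith⟩
        · linarith
      · rintro (⟨h1, h2⟩ | ⟨h1, h2⟩)
        · exact ⟨⟨Or.inl h1, Or.inr (by linarith)⟩, by linarith, h2⟩
        · exact ⟨⟨Or.inr (by linarith), Or.inl (by linarith)⟩, h1, by linarith⟩
    have hd : Disjoint (Set.Ico a l) (Set.Ioc (-l) (-a)) :=
      Set.disjoint_left.2 fun x hx hx' => by linarith [hx.1, hx'.2]
    rw [hset, measure_union hd measurableSet_Ioc, Real.volume_Ico, Real.volume_Ioc,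
      ← ENNReal.ofReal_add (by linarith) (by linarith)]
    refine ⟨by linarith, ?_⟩
    congr 1; ring

/-- The substitution `w = log (stretch l φ)`, with `dw = -sinh l sin φ / stretch l φ dφ`, maps
`(0, π)` onto `(-l, l)` and turns the integral into the length computed in `volume_sineBound`. -/
lemma lintegral_sine_ratio {l ζ : ℝ} (hl : 0 < l) (hζ : 0 < ζ) :
    ∫⁻ φ in Set.Ioo 0 π, ENNReal.ofReal (Real.sinh l * Real.sin φ / stretch l φ)
      * (if Real.sinh l * Real.sin φ / stretch l φ ≤ ζ * min 1 (stretch l φ)⁻¹ then 1 else 0)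
      = ENNReal.ofReal (ζ ^ 2 * fxi ζ l) := by
  have hB := Real.sinh_pos_iff.2 hl
  have hder : ∀ φ : ℝ, HasDerivAt (fun φ => Real.log (stretch l φ))
      (-(Real.sinh l * Real.sin φ / stretch l φ)) φ := by
    intro φ
    have h1 : HasDerivAt (stretch l) (Real.sinh l * (-Real.sin φ)) φ :=
      ((Real.hasDerivAt_cos φ).const_mul _).const_add _
    refine (h1.log (stretch_pos l φ).ne').congr_deriv ?_
    ring
  have hanti : StrictAntiOn (fun φ => Real.log (stretch l φ)) (Set.Icc 0 π) := by
    intro x hx y hy hxy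
    apply Real.log_lt_log (stretch_pos l y)
    have := Real.strictAntiOn_cos hx hy hxy
    unfold stretch
    nlinarith
  have h0 : Real.log (stretch l 0) = l := by
    rw [stretch, Real.cos_zero, mul_one, Real.cosh_add_sinh, Real.log_exp]
  have hpi : Real.log (stretch l π) = -l := by
    rw [stretch, Real.cos_pi, mul_neg_one, ← sub_eq_add_neg, Real.cosh_sub_sinh, Real.log_exp]
  have himage : (fun φ => Real.log (stretch l φ)) '' Set.Ioo 0 π = Set.Ioo (-l) l := by
    apply Set.Subset.antisymm
    · rintro _ ⟨x, hx, rfl⟩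
      have hx' := Set.Ioo_subset_Icc_self hx
      have h1 := hanti (Set.left_mem_Icc.2 Real.pi_pos.le) hx' hx.1
      have h2 := hanti hx' (Set.right_mem_Icc.2 Real.pi_pos.le) hx.2
      simp only [h0, hpi] at h1 h2
      exact ⟨h2, h1⟩
    · have := intermediate_value_Ioo' (f := fun φ => Real.log (stretch l φ)) Real.pi_pos.le
        (fun φ _ => (hder φ).continuousAt.continuousWithinAt)
      simpa only [h0, hpi] using this
  have hcv := lintegral_image_eq_lintegral_abs_deriv_mul measurableSet_Ioo
    (fun φ _ => (hder φ).hasDerivWithinAt) (hanti.injOn.mono Set.Ioo_subset_Icc_self)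
    ({w | sineBound l ζ w ∧ sineBound l ζ (-w)}.indicator 1)
  rw [himage] at hcv
  have hmeas : MeasurableSet {w | sineBound l ζ w ∧ sineBound l ζ (-w)} := by
    unfold sineBound
    apply MeasurableSet.inter
    · exact measurableSet_le (f := fun w => 2 * Real.cosh l * Real.exp w - Real.exp w ^ 2 - 1)
        (by fun_prop) measurable_const
    · exact measurableSet_le
        (f := fun w => 2 * Real.cosh l * Real.exp (-w) - Real.exp (-w) ^ 2 - 1)
        (by fun_prop) measurable_const
  rw [lintegral_indicator_one hmeas, Measure.restrict_apply hmeas, (volume_sineBound hl hζ).2] at hcv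
  rw [hcv]
  refine setLIntegral_congr_fun measurableSet_Ioo fun φ hφ => ?_
  have hs := Real.sin_pos_of_pos_of_lt_pi hφ.1 hφ.2
  have hu := stretch_pos l φ
  have hid : (Real.sinh l * Real.sin φ) ^ 2
      = 2 * Real.cosh l * stretch l φ - stretch l φ ^ 2 - 1 := by
    unfold stretch
    linear_combination Real.sinh l ^ 2 * Real.sin_sq_add_cos_sq φ - Real.cosh_sq l
  have hBs : 0 < Real.sinh l * Real.sin φ := mul_pos hB hs
  rw [abs_neg, abs_of_pos (div_pos hBs hu)]
  congr 1
  have k1 : sineBound l ζ (Real.log (stretch l φ)) ↔ Real.sinh l * Real.sin φ ≤ ζ := by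
    rw [sineBound, Real.exp_log hu, ← hid, sq_le_sq₀ hBs.le hζ.le]
  have k2 : sineBound l ζ (-Real.log (stretch l φ))
      ↔ Real.sinh l * Real.sin φ / stretch l φ ≤ ζ := by
    rw [← sq_le_sq₀ (div_pos hBs hu).le hζ.le, sineBound, Real.exp_neg, Real.exp_log hu, div_pow,
      hid]
    have : 2 * Real.cosh l * (stretch l φ)⁻¹ - (stretch l φ)⁻¹ ^ 2 - 1
      = (2 * Real.cosh l * stretch l φ - stretch l φ ^ 2 - 1) / stretch l φ ^ 2 := by
      field_simp
      ring
    rw [this]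
  have k3 : Real.sinh l * Real.sin φ / stretch l φ ≤ ζ * min 1 (stretch l φ)⁻¹ ↔
      Real.log (stretch l φ) ∈ {w | sineBound l ζ w ∧ sineBound l ζ (-w)} := by
    rw [Set.mem_ofPred_eq, k1, k2, mul_min_of_nonneg _ _ hζ.le, le_min_iff, mul_one,
      ← div_eq_mul_inv, div_le_div_iff_of_pos_right hu, and_comm]
  by_cases h : Real.sinh l * Real.sin φ / stretch l φ ≤ ζ * min 1 (stretch l φ)⁻¹
  · rw [if_pos h, Set.indicator_of_mem (k3.1 h)]; rfl
  · rw [if_neg h, Set.indicator_of_notMem (fun h' => h (k3.2 h'))]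

/-- The main term: by Tonelli, the integral of `f_ζ(l)` over `ζ` is the angular integral of
`radialLength`. The factor `2` comes from the symmetry `φ ↦ -φ`. -/
lemma integral_fxi {l ξ : ℝ} (hl : 0 < l) (hξ : 0 < ξ) :
    2 * ∫ ζ in (0 : ℝ)..ξ, fxi ζ l = ∫ φ in (-π)..π, radialLength ξ l φ := by
  have hB := Real.sinh_pos_iff.2 hl
  set F : ℝ → ℝ → ENNReal := fun ζ φ => ENNReal.ofReal (1 / ζ ^ 2) *
    (ENNReal.ofReal (Real.sinh l * Real.sin φ / stretch l φ)
      * (if Real.sinh l * Real.sin φ / stretch l φ ≤ ζ * min 1 (stretch l φ)⁻¹ then 1 else 0))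
    with hF
  have hcs := (continuous_stretch l).measurable
  have hci := (continuous_stretch_inv l).measurable
  have hv : Measurable fun φ => Real.sinh l * Real.sin φ / stretch l φ := by fun_prop
  have hFm : Measurable (Function.uncurry F) := by
    apply Measurable.mul
    · fun_prop
    · apply Measurable.mul
      · fun_prop
      · refine Measurable.ite (measurableSet_le (by fun_prop) ?_) measurable_const measurable_const
        exact measurable_fst.mul (measurable_const.min (hci.comp measurable_snd))
  have h1 : ∀ ζ ∈ Set.Ioc 0 ξ, ∫⁻ φ in Set.Ioo 0 π, F ζ φ = ENNReal.ofReal (fxi ζ l) := by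
    intro ζ hζ
    have hz := hζ.1
    rw [hF]
    simp only
    rw [lintegral_const_mul' _ _ ENNReal.ofReal_ne_top, lintegral_sine_ratio hl hz,
      ← ENNReal.ofReal_mul (by positivity)]
    congr 1
    field_simp
  have hnn : ∀ ζ ∈ Set.Ioc 0 ξ, 0 ≤ fxi ζ l := by
    intro ζ hζ
    exact nonneg_of_mul_nonneg_right (volume_sineBound hl hζ.1).1 (pow_pos hζ.1 2)
  have h2 : ∀ φ ∈ Set.Ioo 0 π, ∫⁻ ζ in Set.Ioc 0 ξ, F ζ φ
      = ENNReal.ofReal (radialLength ξ l φ) := by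
    intro φ hφ
    have hs := Real.sin_pos_of_pos_of_lt_pi hφ.1 hφ.2
    have hu := stretch_pos l φ
    rw [hF]
    simp only
    rw [lintegral_threshold (div_pos (mul_pos hB hs) hu) (by positivity) hξ, radialLength,
      abs_of_pos hs, div_div, mul_comm ξ]
  have h3 : ∫⁻ ζ in Set.Ioc 0 ξ, ENNReal.ofReal (fxi ζ l)
      = ∫⁻ φ in Set.Ioo 0 π, ENNReal.ofReal (radialLength ξ l φ) := by
    rw [← setLIntegral_congr_fun measurableSet_Ioc h1, lintegral_lintegral_swap hFm.aemeasurable,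
      setLIntegral_congr_fun measurableSet_Ioo h2]
  have hc := continuous_radialLength hξ l
  have h4 : ∫ ζ in (0 : ℝ)..ξ, fxi ζ l = ∫ φ in (0 : ℝ)..π, radialLength ξ l φ := by
    rw [intervalIntegral.integral_of_le hξ.le, intervalIntegral.integral_of_le Real.pi_pos.le,
      integral_eq_lintegral_of_nonneg_ae, integral_eq_lintegral_of_nonneg_ae, h3,
      restrict_Ioo_eq_restrict_Ioc]
    · exact Eventually.of_forall fun φ => le_max_left _ _
    · exact hc.aestronglyMeasurable
    · exact (ae_restrict_iff' measurableSet_Ioc).2 (Eventually.of_forall hnn)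
    · refine Measurable.aestronglyMeasurable ?_
      unfold fxi
      refine Measurable.ite (measurableSet_le (by fun_prop) (by fun_prop)) (by fun_prop) ?_
      refine Measurable.ite (measurableSet_le (by fun_prop) (by fun_prop)) ?_ ?_ <;> fun_prop
  have h5 : ∫ φ in (-π)..0, radialLength ξ l φ = ∫ φ in (0 : ℝ)..π, radialLength ξ l φ := by
    have := intervalIntegral.integral_comp_neg (a := 0) (b := π) (radialLength ξ l)
    simp only [radialLength_neg, neg_zero] at this
    exact this.symm
  rw [← intervalIntegral.integral_add_adjacent_intervals (hc.intervalIntegrable _ 0)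
    (hc.intervalIntegrable 0 _), h5, h4]
  ring

/-! ### Comparison of `RM` with regions whose slices are intervals -/

lemma cosh_sinh_ell {M : SL2R} (hM : 1 < fnormSq M / 2) :
    0 < ell M ∧ Real.cosh (ell M) = fnormSq M / 2 ∧
      Real.sinh (ell M) = √((fnormSq M / 2) ^ 2 - 1) := by
  unfold ell arccosh
  set A := fnormSq M / 2
  have hB : √(A ^ 2 - 1) ^ 2 = A ^ 2 - 1 := Real.sq_sqrt (by nlinarith)
  have hB0 := Real.sqrt_nonneg (A ^ 2 - 1)
  set B := √(A ^ 2 - 1)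
  have hp : 0 < A + B := by linarith
  have hinv : (A + B)⁻¹ = A - B := by
    apply inv_eq_of_mul_eq_one_right
    linear_combination -hB
  refine ⟨Real.log_pos (by linarith), ?_, ?_⟩
  · rw [Real.cosh_eq, Real.exp_neg, Real.exp_log hp, hinv]; ring
  · rw [Real.sinh_eq, Real.exp_neg, Real.exp_log hp, hinv]; ring

/-- A region in the coordinates `(x, e^{iφ})` containing `RM`, where `l = ℓ(M)` and `X = Q² / 2`:
the limiting inequalities, relaxed by `sinh l`. -/
def outerRegion (l ξ X : ℝ) : Set (ℝ × ℂ) :=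
  {p | p.1 < X ∧ p.1 * (Real.cosh l + Real.sinh l * p.2.re) < X + Real.sinh l ∧
    Real.sinh l * |p.2.im| / (ξ / X) - Real.sinh l
      < p.1 * (Real.cosh l + Real.sinh l * p.2.re)}

/-- A region in the coordinates `(x, e^{iφ})` contained in `RM`, where `l = ℓ(M)` and `X = Q² / 2`:
the limiting inequalities, tightened by `sinh l` and `cosh l`. -/
def innerRegion (l ξ X : ℝ) : Set (ℝ × ℂ) :=
  {p | p.1 < X ∧ p.1 * (Real.cosh l + Real.sinh l * p.2.re) < X - Real.sinh l ∧
    Real.sinh l * |p.2.im| / (ξ / X) + Real.cosh l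
      < p.1 * (Real.cosh l + Real.sinh l * p.2.re)}

lemma measurableSet_outerRegion (l ξ X : ℝ) : MeasurableSet (outerRegion l ξ X) := by
  have hre : Measurable fun p : ℝ × ℂ => p.1 * (Real.cosh l + Real.sinh l * p.2.re) :=
    measurable_fst.mul (((Complex.measurable_re.comp measurable_snd).const_mul _).const_add _)
  have him : Measurable fun p : ℝ × ℂ => |p.2.im| :=
    (Complex.measurable_im.comp measurable_snd).abs
  exact (measurableSet_lt measurable_fst measurable_const).inter
    ((measurableSet_lt hre measurable_const).inter (measurableSet_lt
      (((him.const_mul _).div_const _).sub_const _) hre))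

lemma measurableSet_innerRegion (l ξ X : ℝ) : MeasurableSet (innerRegion l ξ X) := by
  have hre : Measurable fun p : ℝ × ℂ => p.1 * (Real.cosh l + Real.sinh l * p.2.re) :=
    measurable_fst.mul (((Complex.measurable_re.comp measurable_snd).const_mul _).const_add _)
  have him : Measurable fun p : ℝ × ℂ => |p.2.im| :=
    (Complex.measurable_im.comp measurable_snd).abs
  exact (measurableSet_lt measurable_fst measurable_const).inter
    ((measurableSet_lt hre measurable_const).inter (measurableSet_lt
      (((him.const_mul _).div_const _).add_const _) hre))

lemma re_unit (φ : ℝ) : (Real.cos φ + Real.sin φ * Complex.I : ℂ).re = Real.cos φ := by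
  rw [Complex.add_re, Complex.ofReal_re, Complex.re_ofReal_mul, Complex.I_re, mul_zero, add_zero]

lemma im_unit (φ : ℝ) : (Real.cos φ + Real.sin φ * Complex.I : ℂ).im = Real.sin φ := by
  rw [Complex.add_im, Complex.ofReal_im, Complex.im_ofReal_mul, Complex.I_im, mul_one, zero_add]

/-- The radial slices of the outer region are intervals, of length at most the limiting one up to
`2 sinh l / stretch`. -/
lemma volume_outer_le {l ξ X : ℝ} (hl : 0 < l) (hξ : 0 < ξ) (hX : 0 < X) (φ : ℝ) :
    volume {x : ℝ | 1 < x ∧ (x, (Real.cos φ + Real.sin φ * Complex.I : ℂ)) ∈ outerRegion l ξ X}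
      ≤ ENNReal.ofReal (X * radialLength ξ l φ + 2 * Real.sinh l * (stretch l φ)⁻¹) := by
  have hu := stretch_pos l φ
  have hB := Real.sinh_pos_iff.2 hl
  set u := stretch l φ with hudef
  set B := Real.sinh l
  set t := B * |Real.sin φ| with ht
  have hsub : {x : ℝ | 1 < x ∧ (x, (Real.cos φ + Real.sin φ * Complex.I : ℂ))
      ∈ outerRegion l ξ X} ⊆ Set.Ioo ((t / (ξ / X) - B) / u) (min X ((X + B) / u)) := by
    rintro x ⟨-, h1, h2, h3⟩
    simp only [re_unit, im_unit] at h1 h2 h3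
    refine ⟨?_, lt_min h1 ?_⟩
    · rw [div_lt_iff₀ hu]; exact h3
    · rw [lt_div_iff₀ hu]; exact h2
  refine (measure_mono hsub).trans ?_
  rw [Real.volume_Ioo]
  apply ENNReal.ofReal_le_ofReal
  have h1 : min 1 u⁻¹ - t / (ξ * u) ≤ radialLength ξ l φ := le_max_right _ _
  have h2 : min X ((X + B) / u) ≤ X * min 1 u⁻¹ + B * u⁻¹ := by
    rw [mul_min_of_nonneg _ _ hX.le, ← min_add_add_right]
    apply min_le_min
    · have : 0 < B * u⁻¹ := by positivity
      linarith
    · apply le_of_eq; rw [div_eq_mul_inv]; ring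
  have h3 : (t / (ξ / X) - B) / u = X * (t / (ξ * u)) - B * u⁻¹ := by
    field_simp
  have h4 := mul_le_mul_of_nonneg_left h1 hX.le
  rw [h3]
  linarith

/-- The slices of the inner region contain intervals of almost the limiting length. The summand `1`
accounts for the radii excluded by `1 < x`. -/
lemma le_volume_inner {l ξ X : ℝ} (hl : 0 < l) (hξ : 0 < ξ) (hX : 0 < X) (φ : ℝ) :
    ENNReal.ofReal (X * radialLength ξ l φ) ≤
      volume {x : ℝ | 1 < x ∧
        (x, (Real.cos φ + Real.sin φ * Complex.I : ℂ)) ∈ innerRegion l ξ X}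
      + ENNReal.ofReal ((Real.cosh l + Real.sinh l) * (stretch l φ)⁻¹ + 1) := by
  have hu := stretch_pos l φ
  have hB := Real.sinh_pos_iff.2 hl
  have hA := Real.cosh_pos l
  rcases le_or_gt (min 1 (stretch l φ)⁻¹
    - Real.sinh l * |Real.sin φ| / (ξ * stretch l φ)) 0 with h0 | h0
  · rw [radialLength, max_eq_left h0, mul_zero, ENNReal.ofReal_zero]
    exact zero_le
  rw [radialLength, max_eq_right h0.le]
  set u := stretch l φ with hudef
  set B := Real.sinh l
  set A := Real.cosh l
  set t := B * |Real.sin φ| with ht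
  have ht0 : 0 ≤ t := by positivity
  have hsub : Set.Ioo (1 + (t / (ξ / X) + A) / u) (min X ((X - B) / u)) ⊆
      {x : ℝ | 1 < x ∧ (x, (Real.cos φ + Real.sin φ * Complex.I : ℂ)) ∈ innerRegion l ξ X} := by
    rintro x ⟨h1, h2⟩
    have h3 := (lt_min_iff.1 h2).1
    have h4 := (lt_div_iff₀ hu).1 (lt_min_iff.1 h2).2
    have h5 : 0 ≤ (t / (ξ / X) + A) / u := by positivity
    refine ⟨by linarith, h3, ?_, ?_⟩
    · simp only [re_unit]; exact h4
    · simp only [re_unit, im_unit]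
      exact (div_lt_iff₀ hu).1 (show (t / (ξ / X) + A) / u < x by linarith)
  refine le_trans ?_ (add_le_add_left (measure_mono hsub) _)
  rw [Real.volume_Ioo]
  have h2 : X * min 1 u⁻¹ - B * u⁻¹ ≤ min X ((X - B) / u) := by
    rw [mul_min_of_nonneg _ _ hX.le, sub_eq_add_neg, ← min_add_add_right]
    apply min_le_min
    · have : 0 < B * u⁻¹ := by positivity
      linarith
    · apply le_of_eq; rw [div_eq_mul_inv]; ring
  have h3 : (t / (ξ / X) + A) / u = X * (t / (ξ * u)) + A * u⁻¹ := by
    field_simp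
  refine le_trans (ENNReal.ofReal_le_ofReal ?_) ENNReal.ofReal_add_le
  rw [h3]
  linarith

section inclusions

variable {M g : SL2R} {Q ξ : ℝ}

lemma fnorm_lt_iff (hQ : 0 < Q) : fnorm g < Q ↔ fnormSq g / 2 < Q ^ 2 / 2 := by
  rw [fnorm, Real.sqrt_lt' hQ]
  constructor <;> intro h <;> linarith

lemma norm_relDir_le (M g : SL2R) : ‖relDir M g‖ ≤ 1 := by
  rw [relDir, norm_div, Complex.norm_real, norm_norm]
  exact div_self_le_one _

/-- An upper bound `tan ε ≤ ε / (1 - ε)`. -/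
lemma tan_mul_le {ε : ℝ} (h0 : 0 < ε) (h1 : ε < 1) : Real.tan ε * (1 - ε) ≤ ε := by
  have h2 := Real.one_sub_sq_div_two_le_cos (x := ε)
  have h3 := Real.sin_le h0.le
  have hc : 0 < Real.cos ε := by nlinarith
  rw [Real.tan_eq_sin_div_cos, div_mul_eq_mul_div, div_le_iff₀ hc]
  nlinarith

/-- Since `√(x² - 1)` differs from `x` by at most one, the exact expressions in `fnormSq_mul` and
`angDist_lt_iff` differ from their limiting forms by at most `B` and `A` respectively. -/
lemma radial_bounds {x A B c : ℝ} (hx : 1 < x) (hA : 0 ≤ A) (hB : 0 ≤ B) (hc : |c| ≤ 1) :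
    (x * A + √(x ^ 2 - 1) * B * c ≤ x * (A + B * c) + B ∧
      x * (A + B * c) - B ≤ x * A + √(x ^ 2 - 1) * B * c) ∧
    (√(x ^ 2 - 1) * A + x * B * c ≤ x * (A + B * c) ∧
      x * (A + B * c) - A ≤ √(x ^ 2 - 1) * A + x * B * c) := by
  have h1 : √(x ^ 2 - 1) ≤ x := Real.sqrt_le_iff.2 ⟨by linarith, by linarith⟩
  have h2 : x - 1 ≤ √(x ^ 2 - 1) := Real.le_sqrt_of_sq_le (by nlinarith)
  have hc' := abs_le.1 hc
  set y := √(x ^ 2 - 1)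
  have h3 : |(x - y) * B * c| ≤ B := by
    rw [abs_mul, abs_mul, abs_of_nonneg hB, abs_of_nonneg (by linarith : 0 ≤ x - y)]
    calc (x - y) * B * |c| ≤ 1 * B * 1 := by gcongr; linarith
      _ = B := by ring
  have h4 := abs_le.1 h3
  refine ⟨⟨?_, ?_⟩, ?_, ?_⟩ <;> nlinarith

lemma RM_subset (hM : 1 < fnormSq M / 2) (hξ : 0 < ξ) (hQ : 0 < Q) (hε : ξ / (Q ^ 2 / 2) < 1) :
    RM M Q ξ ⊆ {g | 1 < fnormSq g / 2 ∧
      (fnormSq g / 2, relDir M g) ∈ outerRegion (ell M) ξ (Q ^ 2 / 2)} := by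
  obtain ⟨hl, hch, hsh⟩ := cosh_sinh_ell hM
  rintro g ⟨hg, hgM, h1, h2, h3⟩
  rw [smul_I_ne_iff] at hg hgM
  rw [fnorm_lt_iff hQ] at h1 h2
  have h0 : 0 < ξ / (Q ^ 2 / 2) := by positivity
  rw [show 2 * ξ / Q ^ 2 = ξ / (Q ^ 2 / 2) by field_simp,
    angDist_lt_iff hM hg hgM h0 (by linarith [Real.pi_gt_three])] at h3
  rw [fnormSq_mul hM hg] at h2
  have hn := norm_relDir_le M g
  have hre := (Complex.abs_re_le_norm _).trans hn
  have him := (Complex.abs_im_le_norm _).trans hn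
  have hu := stretch_pos
  obtain ⟨⟨b1, b2⟩, b3, b4⟩ := radial_bounds hg (by linarith : 0 ≤ fnormSq M / 2)
    (Real.sqrt_nonneg ((fnormSq M / 2) ^ 2 - 1)) hre
  refine ⟨hg, ?_⟩
  simp only [outerRegion, Set.mem_ofPred_eq, hch, hsh]
  refine ⟨h1, by linarith, ?_⟩
  set ε := ξ / (Q ^ 2 / 2)
  set B := √((fnormSq M / 2) ^ 2 - 1)
  have hB : 0 ≤ B := Real.sqrt_nonneg _
  have ht := tan_mul_le h0 hε
  have htp : 0 < Real.tan ε :=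
    Real.tan_pos_of_pos_of_lt_pi_div_two h0 (by linarith [Real.pi_gt_three])
  rw [sub_lt_iff_lt_add, div_lt_iff₀ h0]
  set s := |(relDir M g).im|
  have hs : 0 ≤ s := abs_nonneg _
  set w := fnormSq g / 2 * (fnormSq M / 2 + B * (relDir M g).re)
  have h5 : B * s < Real.tan ε * w :=
    h3.trans_le (mul_le_mul_of_nonneg_left b3 htp.le)
  have hw : 0 < w := by
    have : 0 ≤ B * s := by positivity
    exact (pos_iff_pos_of_mul_pos (this.trans_lt h5)).1 htp
  -- `tan ε (1 - ε) ≤ ε` replaces the tangent by `ε` at the cost of `B s ε ≤ B ε`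
  have h6 : B * s * (1 - ε) < Real.tan ε * w * (1 - ε) :=
    mul_lt_mul_of_pos_right h5 (by linarith)
  have h7 : Real.tan ε * (1 - ε) * w ≤ ε * w := mul_le_mul_of_nonneg_right ht hw.le
  have h8 : B * s * ε ≤ B * ε := by nlinarith [mul_nonneg hB h0.le]
  nlinarith

lemma subset_RM (hM : 1 < fnormSq M / 2) (hξ : 0 < ξ) (hQ : 0 < Q) (hε : ξ / (Q ^ 2 / 2) < 1) :
    {g | 1 < fnormSq g / 2 ∧
      (fnormSq g / 2, relDir M g) ∈ innerRegion (ell M) ξ (Q ^ 2 / 2)} ⊆ RM M Q ξ := by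
  obtain ⟨hl, hch, hsh⟩ := cosh_sinh_ell hM
  rintro g ⟨hg, h⟩
  simp only [innerRegion, Set.mem_ofPred_eq, hch, hsh] at h
  obtain ⟨h1, h2, h3⟩ := h
  have h0 : 0 < ξ / (Q ^ 2 / 2) := by positivity
  have hre := (Complex.abs_re_le_norm _).trans (norm_relDir_le M g)
  obtain ⟨⟨b1, b2⟩, b3, b4⟩ := radial_bounds hg (by linarith : 0 ≤ fnormSq M / 2)
    (Real.sqrt_nonneg ((fnormSq M / 2) ^ 2 - 1)) hre
  have hB : 0 ≤ √((fnormSq M / 2) ^ 2 - 1) := Real.sqrt_nonneg _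
  have hR : √((fnormSq M / 2) ^ 2 - 1) * |(relDir M g).im| / (ξ / (Q ^ 2 / 2)) <
      √((fnormSq g / 2) ^ 2 - 1) * (fnormSq M / 2)
        + fnormSq g / 2 * √((fnormSq M / 2) ^ 2 - 1) * (relDir M g).re := by linarith
  have hR0 : 0 < √((fnormSq g / 2) ^ 2 - 1) * (fnormSq M / 2)
        + fnormSq g / 2 * √((fnormSq M / 2) ^ 2 - 1) * (relDir M g).re :=
    lt_of_le_of_lt (by positivity) hR
  have hgM : 1 < fnormSq (g * M) / 2 := by
    rw [← qC_ne_zero_iff]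
    intro h
    have key := pq_mul hM hg
    rw [h, mul_zero, zero_mul, eq_comm, mul_eq_zero] at key
    rcases key with key | key
    · exact mul_ne_zero (pC_ne_zero g) ((qC_ne_zero_iff g).2 hg) key
    · have := congrArg Complex.re key
      rw [Complex.sub_re, Complex.ofReal_re, Complex.re_ofReal_mul, Complex.I_re, mul_zero,
        sub_zero, Complex.zero_re] at this
      exact hR0.ne' this
  refine ⟨(smul_I_ne_iff g).2 hg, (smul_I_ne_iff _).2 hgM, (fnorm_lt_iff hQ).2 h1,
    (fnorm_lt_iff hQ).2 ?_, ?_⟩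
  · rw [fnormSq_mul hM hg]; linarith
  · rw [show 2 * ξ / Q ^ 2 = ξ / (Q ^ 2 / 2) by field_simp,
      angDist_lt_iff hM hg hgM h0 (by linarith [Real.pi_gt_three])]
    rw [div_lt_iff₀' h0] at hR
    exact hR.trans_le (mul_le_mul_of_nonneg_right
      (Real.le_tan h0.le (by linarith [Real.pi_gt_three])) hR0.le)

end inclusions

/-! ### Integration over the angle -/

lemma lintegral_continuous {f : ℝ → ℝ} (hf : Continuous f) (h0 : ∀ x, 0 ≤ f x) :
    ∫⁻ φ in Set.Ioo (-π) π, ENNReal.ofReal (f φ) = ENNReal.ofReal (∫ φ in (-π)..π, f φ) := by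
  have h : -π ≤ π := by linarith [Real.pi_pos]
  rw [intervalIntegral.integral_of_le h, restrict_Ioo_eq_restrict_Ioc,
    ofReal_integral_eq_lintegral_ofReal]
  · exact (intervalIntegrable_iff_integrableOn_Ioc_of_le h).1 (hf.intervalIntegrable _ _)
  · exact Eventually.of_forall h0

lemma integral_radialLength_add {ξ l : ℝ} (hξ : 0 < ξ) (X a b : ℝ) :
    ∫ φ in (-π)..π, (X * radialLength ξ l φ + (a * (stretch l φ)⁻¹ + b))
      = X * (∫ φ in (-π)..π, radialLength ξ l φ) + 2 * π * (a + b) := by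
  have h1 := ((continuous_radialLength hξ l).const_mul X).intervalIntegrable (μ := volume) (-π) π
  have h2 := ((continuous_stretch_inv l).const_mul a).intervalIntegrable (μ := volume) (-π) π
  have h3 := (continuous_const (y := b)).intervalIntegrable (μ := volume) (-π) π
  rw [intervalIntegral.integral_add h1 (h2.add h3), intervalIntegral.integral_add h2 h3,
    intervalIntegral.integral_const_mul, intervalIntegral.integral_const_mul,
    integral_stretch_inv, intervalIntegral.integral_const]
  rw [smul_eq_mul]
  ring

/-- A bound for the error independent of `Q`: the errors in the radial slices are
`O(‖M‖² (1 / stretch + 1))`, and `1 / stretch` has angular mean one. -/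
lemma abs_volume_RM_sub_le (μ : Measure SL2R) [μ.IsHaarMeasure]
    (hnorm : Tendsto (fun Q : ℝ => μ {g : SL2R | fnorm g < Q} / ENNReal.ofReal (Q ^ 2))
      atTop (𝓝 (ENNReal.ofReal (2 * π)))) {M : SL2R} {Q ξ : ℝ} (hM : 1 < fnormSq M / 2)
    (hξ : 0 < ξ) (hQ : 0 < Q) (hε : ξ / (Q ^ 2 / 2) < 1) :
    |(μ (RM M Q ξ)).toReal - 2 * Q ^ 2 * ∫ ζ in (0:ℝ)..ξ, fxi ζ (ell M)|
      ≤ 6 * π * fnormSq M := by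
  obtain ⟨hl, hch, hsh⟩ := cosh_sinh_ell hM
  have hX : 0 < Q ^ 2 / 2 := by positivity
  have hB := Real.sinh_pos_iff.2 hl
  have hBA := (Real.sinh_lt_cosh (ell M)).le
  have hA : 1 < Real.cosh (ell M) := Real.one_lt_cosh.2 hl.ne'
  have hpi := Real.pi_pos
  set I := ∫ φ in (-π)..π, radialLength ξ (ell M) φ with hI
  have hI0 : 0 ≤ I := intervalIntegral.integral_nonneg (by linarith) fun φ _ => le_max_left _ _
  have hmain : 2 * Q ^ 2 * ∫ ζ in (0:ℝ)..ξ, fxi ζ (ell M) = 2 * (Q ^ 2 / 2 * I) := by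
    rw [hI, ← integral_fxi hl hξ]; ring
  have hcL := continuous_radialLength hξ (ell M)
  have hcu := continuous_stretch_inv (ell M)
  have hL0 : ∀ φ, 0 ≤ radialLength ξ (ell M) φ := fun φ => le_max_left _ _
  have hu0 : ∀ φ, 0 ≤ (stretch (ell M) φ)⁻¹ := fun φ => (inv_pos.2 (stretch_pos _ φ)).le
  have hup : μ (RM M Q ξ) ≤
      ENNReal.ofReal (2 * (Q ^ 2 / 2 * I + 2 * π * (2 * Real.sinh (ell M) + 0))) := by
    calc μ (RM M Q ξ) ≤ _ := measure_mono (RM_subset hM hξ hQ hε)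
      _ = 2 * ∫⁻ φ in Set.Ioo (-π) π, volume {x : ℝ | 1 < x ∧
          (x, (Real.cos φ + Real.sin φ * Complex.I : ℂ))
            ∈ outerRegion (ell M) ξ (Q ^ 2 / 2)} :=
        haar_polar μ hnorm (measurableSet_outerRegion _ _ _) (norm_phase hM)
      _ ≤ 2 * ∫⁻ φ in Set.Ioo (-π) π, ENNReal.ofReal (Q ^ 2 / 2 * radialLength ξ (ell M) φ
          + (2 * Real.sinh (ell M) * (stretch (ell M) φ)⁻¹ + 0)) := by
        gcongr with φ
        rw [add_zero]
        exact volume_outer_le hl hξ hX φ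
      _ = _ := by
        rw [lintegral_continuous (by fun_prop), integral_radialLength_add hξ,
          ENNReal.ofReal_mul two_pos.le, ENNReal.ofReal_ofNat]
        intro φ
        have := hL0 φ
        have := hu0 φ
        positivity
  have hlow : ENNReal.ofReal (2 * (Q ^ 2 / 2 * I)) ≤ μ (RM M Q ξ)
      + ENNReal.ofReal (2 * (2 * π * (Real.cosh (ell M) + Real.sinh (ell M) + 1))) := by
    calc ENNReal.ofReal (2 * (Q ^ 2 / 2 * I))
        = 2 * ∫⁻ φ in Set.Ioo (-π) π,
          ENNReal.ofReal (Q ^ 2 / 2 * radialLength ξ (ell M) φ) := by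
          rw [lintegral_continuous (by fun_prop) fun φ => mul_nonneg hX.le (hL0 φ),
            intervalIntegral.integral_const_mul, ENNReal.ofReal_mul two_pos.le,
            ENNReal.ofReal_ofNat]
      _ ≤ 2 * ∫⁻ φ in Set.Ioo (-π) π, (volume {x : ℝ | 1 < x ∧
          (x, (Real.cos φ + Real.sin φ * Complex.I : ℂ)) ∈ innerRegion (ell M) ξ (Q ^ 2 / 2)}
          + ENNReal.ofReal ((Real.cosh (ell M) + Real.sinh (ell M)) * (stretch (ell M) φ)⁻¹
            + 1)) := by
        gcongr with φ
        exact le_volume_inner hl hξ hX φ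
      _ = 2 * (∫⁻ φ in Set.Ioo (-π) π, volume {x : ℝ | 1 < x ∧
          (x, (Real.cos φ + Real.sin φ * Complex.I : ℂ)) ∈ innerRegion (ell M) ξ (Q ^ 2 / 2)})
          + ENNReal.ofReal
            (2 * (2 * π * (Real.cosh (ell M) + Real.sinh (ell M) + 1))) := by
        have h0 := integral_radialLength_add (l := ell M) hξ 0
          (Real.cosh (ell M) + Real.sinh (ell M)) 1
        simp only [zero_mul, zero_add] at h0
        rw [lintegral_add_right _ ((hcu.measurable.const_mul _).add_const _).ennreal_ofReal, mul_add, lintegral_continuous (by fun_prop), h0,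
          ENNReal.ofReal_mul (p := 2) two_pos.le, ENNReal.ofReal_ofNat]
        intro φ
        have := hu0 φ
        positivity
      _ ≤ _ := by
        gcongr
        rw [← haar_polar μ hnorm (measurableSet_innerRegion _ _ _) (norm_phase hM)]
        exact measure_mono (subset_RM hM hξ hQ hε)
  have hfin : μ (RM M Q ξ) ≠ ⊤ := (hup.trans_lt ENNReal.ofReal_lt_top).ne
  have hup' : (μ (RM M Q ξ)).toReal
      ≤ 2 * (Q ^ 2 / 2 * I + 2 * π * (2 * Real.sinh (ell M) + 0)) :=
    ENNReal.toReal_le_of_le_ofReal (by positivity) hup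
  rw [← ENNReal.ofReal_toReal hfin,
    ← ENNReal.ofReal_add ENNReal.toReal_nonneg (by positivity),
    ENNReal.ofReal_le_ofReal_iff (by positivity)] at hlow
  rw [hmain, show fnormSq M = 2 * Real.cosh (ell M) by rw [hch]; ring, abs_le]
  constructor <;> nlinarith

/-- Proposition 1.8: volume asymptotics for the regions `R_M(Q,ξ)`. -/
theorem volume_RM_asymptotic
    (μ : Measure SL2R) [μ.IsHaarMeasure]
    (hnorm : Tendsto (fun Q : ℝ => μ {g : SL2R | fnorm g < Q} / ENNReal.ofReal (Q ^ 2))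
      atTop (𝓝 (ENNReal.ofReal (2 * π)))) :
    ∀ ξ : ℝ, 0 < ξ → ∃ C > (0:ℝ), ∃ Q₀ > (0:ℝ), ∀ Q : ℝ, Q₀ ≤ Q → ∀ M : SL2R,
      M • UpperHalfPlane.I ≠ UpperHalfPlane.I →
      |(μ (RM M Q ξ)).toReal - 2 * Q ^ 2 * ∫ ζ in (0:ℝ)..ξ, fxi ζ (ell M)|
        ≤ C * fnormSq M * Q ^ ((2:ℝ) / 3) := by
  intro ξ hξ
  -- For `Q ≥ Q₀` the angular window `2ξ/Q²` is less than `1`, and `Q ^ (2/3) ≥ 1`.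
  refine ⟨6 * π, by positivity, 2 + 2 * ξ, by positivity, fun Q hQ M hM => ?_⟩
  have hQ0 : 0 < Q := by linarith
  refine (abs_volume_RM_sub_le μ hnorm ((smul_I_ne_iff M).1 hM) hξ hQ0 ?_).trans ?_
  · rw [div_lt_one (by positivity)]; nlinarith
  · have h1 : 1 ≤ Q ^ ((2 : ℝ) / 3) := Real.one_le_rpow (by linarith) (by norm_num)
    have h2 : 0 ≤ 6 * π * fnormSq M := by
      have := one_le_half_fnormSq M
      have : 0 ≤ fnormSq M := by linarith
      positivity
    exact le_mul_of_one_le_right h2 h1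
end
end

section
/- Let Γ be a discrete subgroup of SL₂(ℝ). For every ξ > 0 there is a constant C = C(Γ,ξ) > 0 such that for all Q ≥ 20 and all T with 1 ≤ T ≤ Q: #{(γ,γ′) ∈ Γ × Γ : γ·i ≠ i, γ′·i ≠ i, ‖γ‖ ≤ Q, ‖γ′‖ ≤ Q, |θ_γ − θ_{γ′}| < 2ξ/Q², ‖γ^{-1}γ′‖ ≥ T} ≤ C·Q²·(log Q)/T². -/
/-!
Put `t = d(i, γ·i)` and `t' = d(i, γ'·i)`, so that `‖γ‖² = 2 cosh t`. The hyperbolic law of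
cosines reads
`‖γ⁻¹γ'‖² / 2 = cosh (t - t') + sinh t sinh t' (1 - cos (θ_γ - θ_γ'))`  (`fnormSq_inv_mul`).
For the pairs being counted `sinh t sinh t' ≤ Q⁴/4` and `1 - cos (θ_γ - θ_γ') = O(Q⁻⁴)`, so the
last term is `O(1)`. Two consequences follow.

* If `t ≤ t'` and `‖γ⁻¹γ'‖ ≥ T`, then `cosh (t' - t) ≥ T²/2 - O(1)`, which forces
  `cosh t = O(Q²/T²)` (`coshDist_le_of_far`). By the lattice-point bound `exists_ball_count`
  there are `O(Q²/T²)` such `γ`.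
* For fixed `γ`, all admissible `γ'·i` lie in a tube of bounded width around a geodesic segment of
  length `O(log Q)`, so there are `O(log Q)` of them (`exists_sector_count`).

Pairs with `t' < t` are handled by exchanging `γ` and `γ'`. Both counts cut the region into pieces
of bounded diameter; discreteness enters only through `exists_card_le`, which bounds the number of
elements of `Γ` in such a piece.
-/

open Matrix MeasureTheory Real Filter Topology
open scoped MatrixGroups Pointwise

noncomputable section

/-- `cosh` of the hyperbolic distance from `i` to `g·i`. -/
def coshDist (g : SL2R) : ℝ := fnormSq g / 2

/-- `sinh` of the hyperbolic distance from `i` to `g·i`. -/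
def sinhDist (g : SL2R) : ℝ := √(coshDist g ^ 2 - 1)

lemma det_eq (g : SL2R) : g.1 0 0 * g.1 1 1 - g.1 0 1 * g.1 1 0 = 1 := by
  have h := g.2
  rwa [Matrix.det_fin_two] at h

lemma one_le_coshDist (g : SL2R) : 1 ≤ coshDist g := by
  have h := det_eq g
  unfold coshDist fnormSq
  nlinarith [sq_nonneg (g.1 0 0 - g.1 1 1), sq_nonneg (g.1 0 1 + g.1 1 0)]

lemma sinhDist_nonneg (g : SL2R) : 0 ≤ sinhDist g := Real.sqrt_nonneg _

lemma sinhDist_sq (g : SL2R) : sinhDist g ^ 2 = coshDist g ^ 2 - 1 :=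
  Real.sq_sqrt (by nlinarith [one_le_coshDist g])

lemma sinhDist_le (g : SL2R) : sinhDist g ≤ coshDist g := by
  have := one_le_coshDist g
  exact Real.sqrt_le_iff.2 ⟨by linarith, by linarith⟩

/-- First coordinate of the symmetric matrix `g gᵀ = coshDist g • 1 + !![x, y; y, -x]`. -/
def coordX (g : SL2R) : ℝ := (g.1 0 0 ^ 2 + g.1 0 1 ^ 2 - g.1 1 0 ^ 2 - g.1 1 1 ^ 2) / 2

/-- Second coordinate of the symmetric matrix `g gᵀ = coshDist g • 1 + !![x, y; y, -x]`. -/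
def coordY (g : SL2R) : ℝ := g.1 0 0 * g.1 1 0 + g.1 0 1 * g.1 1 1

lemma coord_sq (g : SL2R) : coordX g ^ 2 + coordY g ^ 2 = coshDist g ^ 2 - 1 := by
  have h := det_eq g
  unfold coordX coordY coshDist fnormSq
  linear_combination (-(g.1 0 0 * g.1 1 1 - g.1 0 1 * g.1 1 0) - 1) * h

/-- The angle `θ_g` is the argument of `x - iy`, because `(g·i - i)/(g·i + i)` is a positive
multiple of `x - iy`. -/
lemma theta_eq_s2 (g : SL2R) : theta g = Complex.arg ⟨coordX g, -coordY g⟩ := by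
  have h := det_eq g
  set a := g.1 0 0 with ha
  set b := g.1 0 1 with hb
  set c := g.1 1 0 with hc
  set d := g.1 1 1 with hd
  have hr : 0 < c ^ 2 + d ^ 2 := by
    rcases eq_or_ne c 0 with h0 | h0
    · have : d ≠ 0 := by rintro h1; simp [h0, h1] at h
      positivity
    · positivity
  have hI : ((g • UpperHalfPlane.I : UpperHalfPlane) : ℂ)
      = (a * Complex.I + b) / (c * Complex.I + d) := by
    rw [UpperHalfPlane.specialLinearGroup_apply]
    simp [ha, hb, hc, hd]
  have hden : (c * Complex.I + d : ℂ) ≠ 0 := by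
    intro h0
    have h1 := congrArg Complex.re h0
    have h2 := congrArg Complex.im h0
    simp at h1 h2
    simp [h1, h2] at hr
  have hE : 0 < (b - c) ^ 2 + (a + d) ^ 2 := by nlinarith [sq_nonneg (b + c), sq_nonneg (a - d)]
  have hden2 : ((b - c : ℝ) + (a + d : ℝ) * Complex.I : ℂ) ≠ 0 := by
    intro h0
    have h1 := congrArg Complex.re h0
    have h2 := congrArg Complex.im h0
    simp at h1 h2
    rw [h1, h2] at hE
    simp at hE
  have key : (((g • UpperHalfPlane.I : UpperHalfPlane) : ℂ) - Complex.I)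
      / (((g • UpperHalfPlane.I : UpperHalfPlane) : ℂ) + Complex.I)
      = ((2 / ((b - c) ^ 2 + (a + d) ^ 2) : ℝ) : ℂ) * ⟨coordX g, -coordY g⟩ := by
    have e1 : ((g • UpperHalfPlane.I : UpperHalfPlane) : ℂ) - Complex.I
        = ((b + c : ℝ) + (a - d : ℝ) * Complex.I) / (c * Complex.I + d) := by
      rw [hI, eq_div_iff hden, sub_mul, div_mul_cancel₀ _ hden]
      push_cast
      linear_combination -(c : ℂ) * Complex.I_mul_I
    have e2 : ((g • UpperHalfPlane.I : UpperHalfPlane) : ℂ) + Complex.I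
        = ((b - c : ℝ) + (a + d : ℝ) * Complex.I) / (c * Complex.I + d) := by
      rw [hI, eq_div_iff hden, add_mul, div_mul_cancel₀ _ hden]
      push_cast
      linear_combination (c : ℂ) * Complex.I_mul_I
    rw [e1, e2, div_div_div_cancel_right₀ hden, div_eq_iff hden2]
    have hE' := hE.ne'
    rw [mul_assoc]
    apply Complex.ext
    · rw [Complex.re_ofReal_mul, div_mul_eq_mul_div, eq_div_iff hE']
      simp [coordX, coordY, ← ha, ← hb, ← hc, ← hd]
      ring
    · rw [Complex.im_ofReal_mul, div_mul_eq_mul_div, eq_div_iff hE']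
      simp [coordX, coordY, ← ha, ← hb, ← hc, ← hd]
      ring
  unfold theta
  rw [key, Complex.arg_real_mul _ (by positivity)]

lemma norm_coord (g : SL2R) : ‖(⟨coordX g, -coordY g⟩ : ℂ)‖ = sinhDist g := by
  rw [Complex.norm_def, Complex.normSq_mk, sinhDist, ← coord_sq]
  congr 1; ring

lemma coordX_eq (g : SL2R) : coordX g = sinhDist g * Real.cos (theta g) := by
  rw [theta_eq_s2, ← norm_coord, Complex.norm_mul_cos_arg]

lemma coordY_eq (g : SL2R) : coordY g = -(sinhDist g * Real.sin (theta g)) := by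
  rw [theta_eq_s2, ← norm_coord, Complex.norm_mul_sin_arg]; simp

/-- The hyperbolic law of cosines for the triangle `i`, `g·i`, `h·i`, in the form
`cosh t cosh t' - sinh t sinh t' cos Δθ
  = (cosh t cosh t' - sinh t sinh t') + sinh t sinh t' (1 - cos Δθ)`. -/
lemma fnormSq_inv_mul (g h : SL2R) : fnormSq (g⁻¹ * h) =
    2 * (coshDist g * coshDist h - sinhDist g * sinhDist h)
      + 2 * (sinhDist g * sinhDist h * (1 - Real.cos (theta g - theta h))) := by
  have e : fnormSq (g⁻¹ * h) =
      2 * (coshDist g * coshDist h - coordX g * coordX h - coordY g * coordY h) := by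
    simp only [fnormSq, coshDist, coordX, coordY, Matrix.SpecialLinearGroup.coe_mul,
      Matrix.SpecialLinearGroup.coe_inv, Matrix.adjugate_fin_two, Matrix.mul_apply,
      Fin.sum_univ_two, Matrix.of_apply, Matrix.cons_val', Matrix.cons_val_zero,
      Matrix.cons_val_one, Matrix.cons_val_fin_one]
    ring
  rw [e, coordX_eq, coordX_eq, coordY_eq, coordY_eq, Real.cos_sub]
  ring

/-- `cosh (t - t') ≤ (cosh² t + cosh² t') / (cosh t cosh t')`, with the denominator cleared. -/
lemma cosh_sub_mul_le (g h : SL2R) :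
    (coshDist g * coshDist h - sinhDist g * sinhDist h) * (coshDist g * coshDist h)
      ≤ coshDist g ^ 2 + coshDist h ^ 2 := by
  have h1 := one_le_coshDist g
  have h2 := one_le_coshDist h
  have h3 := sinhDist_nonneg g
  have h4 := sinhDist_nonneg h
  have h5 := sinhDist_sq g
  have h6 := sinhDist_sq h
  have h7 : sinhDist g * sinhDist h ≤ coshDist g * coshDist h :=
    mul_le_mul (sinhDist_le g) (sinhDist_le h) h4 (by linarith)
  -- the conjugate factor `cosh (t + t')` turns the left side into a polynomial
  have h8 : (coshDist g * coshDist h - sinhDist g * sinhDist h)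
      * (coshDist g * coshDist h + sinhDist g * sinhDist h)
      = coshDist g ^ 2 + coshDist h ^ 2 - 1 := by
    linear_combination (-(sinhDist h) ^ 2) * h5 - (coshDist g ^ 2 - 1) * h6
  nlinarith [mul_nonneg (sub_nonneg.2 h7) (mul_nonneg h3 h4)]

/-- Orbit points at comparable distance from `i` and with small angular separation are
a bounded distance apart. -/
lemma fnormSq_inv_mul_le {g h : SL2R} {B δ : ℝ} (h1 : coshDist g ≤ 2 * coshDist h)
    (h2 : coshDist h ≤ 2 * coshDist g) (hg : coshDist g ≤ B) (hh : coshDist h ≤ B)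
    (hδ : 1 - Real.cos (theta g - theta h) ≤ δ) :
    fnormSq (g⁻¹ * h) ≤ 8 + 2 * (B ^ 2 * δ) := by
  have g1 := one_le_coshDist g
  have g2 := one_le_coshDist h
  have k : coshDist g * coshDist h - sinhDist g * sinhDist h ≤ 4 := by
    have := cosh_sub_mul_le g h
    by_contra! hc
    have : 4 * (coshDist g * coshDist h) <
      (coshDist g * coshDist h - sinhDist g * sinhDist h) * (coshDist g * coshDist h) :=
      mul_lt_mul_of_pos_right hc (by positivity)
    nlinarith
  have k2 : sinhDist g * sinhDist h ≤ B ^ 2 := by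
    rw [sq]
    exact mul_le_mul ((sinhDist_le g).trans hg) ((sinhDist_le h).trans hh)
      (sinhDist_nonneg h) (by linarith)
  have k3 : sinhDist g * sinhDist h * (1 - Real.cos (theta g - theta h)) ≤ B ^ 2 * δ :=
    mul_le_mul k2 hδ (by linarith [Real.cos_le_one (theta g - theta h)]) (by positivity)
  rw [fnormSq_inv_mul]
  linarith

lemma one_sub_cos_le (a b : ℝ) : 1 - Real.cos (a - b) ≤ angDist a b ^ 2 / 2 := by
  have h := Real.one_sub_sq_div_two_le_cos (x := ((a - b : ℝ) : Real.Angle).toReal)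
  rw [Real.Angle.cos_toReal, Real.Angle.cos_coe] at h
  rw [angDist, sq_abs]
  linarith

/-- The parallelogram inequality `|z - w|² ≤ 2|z - 1|² + 2|w - 1|²` on the unit circle. -/
lemma one_sub_cos_triangle (a b c : ℝ) :
    1 - Real.cos (a - b) ≤ 2 * (1 - Real.cos (c - a)) + 2 * (1 - Real.cos (c - b)) := by
  have e : Real.cos (a - b) = Real.cos (c - a) * Real.cos (c - b)
      + Real.sin (c - a) * Real.sin (c - b) := by
    rw [← Real.cos_sub, ← Real.cos_neg]; congr 1; ring
  rw [e]
  nlinarith [Real.sin_sq_add_cos_sq (c - a), Real.sin_sq_add_cos_sq (c - b),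
    sq_nonneg (Real.sin (c - a) + Real.sin (c - b)),
    sq_nonneg (Real.cos (c - a) + Real.cos (c - b) - 2)]

lemma isCompact_fnormSq_le (r : ℝ) : IsCompact {g : SL2R | fnormSq g ≤ r} := by
  have hemb : IsClosedEmbedding (fun g : SL2R => (g : Matrix (Fin 2) (Fin 2) ℝ)) := by
    have hcl : IsClosed {A : Matrix (Fin 2) (Fin 2) ℝ | A.det = 1} :=
      isClosed_eq continuous_id.matrix_det continuous_const
    exact hcl.isClosedEmbedding_subtypeVal
  have hK : IsCompact {A : Matrix (Fin 2) (Fin 2) ℝ |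
      ∀ i, A i ∈ {v : Fin 2 → ℝ | ∀ j, v j ∈ Set.Icc (-√r) (√r)}} :=
    isCompact_pi_infinite fun _ => isCompact_pi_infinite fun _ => isCompact_Icc
  refine (hemb.isCompact_preimage hK).of_isClosed_subset ?_ ?_
  · refine isClosed_le ?_ continuous_const
    unfold fnormSq
    have := continuous_coe_SL2R
    have hc : ∀ i j, Continuous fun g : SL2R => (g : Matrix (Fin 2) (Fin 2) ℝ) i j :=
      fun i j => this.matrix_elem i j
    have h00 := hc 0 0
    have h01 := hc 0 1
    have h10 := hc 1 0
    have h11 := hc 1 1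
    fun_prop
  · intro g hg
    have hg' : g.1 0 0 ^ 2 + g.1 0 1 ^ 2 + g.1 1 0 ^ 2 + g.1 1 1 ^ 2 ≤ r := hg
    have key : ∀ i j, g.1 i j ∈ Set.Icc (-√r) (√r) := by
      intro i j
      rw [Set.mem_Icc, ← abs_le]
      apply Real.abs_le_sqrt
      fin_cases i <;> fin_cases j <;> simp <;>
        nlinarith [sq_nonneg (g.1 0 0), sq_nonneg (g.1 0 1), sq_nonneg (g.1 1 0),
          sq_nonneg (g.1 1 1)]
    exact key

lemma finite_fnormSq_le (Γ : Subgroup SL2R) (hdisc : DiscreteTopology Γ) (r : ℝ) :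
    {γ : Γ | fnormSq (γ : SL2R) ≤ r}.Finite := by
  have : IsTopologicalGroup SL2R := Matrix.SpecialLinearGroup.topologicalGroup
  have : T2Space SL2R :=
    inferInstanceAs (T2Space {A : Matrix (Fin 2) (Fin 2) ℝ // A.det = 1})
  have hcl : IsClosed (Γ : Set SL2R) := Subgroup.isClosed_of_discrete
  exact (hcl.isClosedEmbedding_subtypeVal.isCompact_preimage
    (isCompact_fnormSq_le r)).finite_of_discrete

/-- A set of elements of `Γ` of bounded diameter has bounded cardinality, uniformly in the
position of the set: translate it to the identity. -/
lemma exists_card_le (Γ : Subgroup SL2R) (hdisc : DiscreteTopology Γ) (r : ℝ) :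
    ∃ N : ℕ, 0 < N ∧ ∀ S : Finset Γ,
      (∀ g ∈ S, ∀ h ∈ S, fnormSq ((g : SL2R)⁻¹ * (h : SL2R)) ≤ r) → S.card ≤ N := by
  have hf := finite_fnormSq_le Γ hdisc r
  refine ⟨hf.toFinset.card + 1, by omega, fun S hS => ?_⟩
  rcases S.eq_empty_or_nonempty with rfl | ⟨g, hg⟩
  · simp
  · refine (Finset.card_le_card_of_injOn (fun h => g⁻¹ * h) ?_ ?_).trans (Nat.le_succ _)
    · intro h hh
      simpa using hS g hg h hh
    · intro a _ b _ hab
      simpa using hab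

/-- The lattice-point bound `#{γ ∈ Γ : cosh d(i, γ·i) ≤ R} = O(R)`: the shell
`2ⁿ ≤ cosh t < 2ⁿ⁺¹` is cut into `O(2ⁿ)` sectors of bounded diameter. -/
lemma exists_ball_count (Γ : Subgroup SL2R) (hdisc : DiscreteTopology Γ) :
    ∃ C > (0 : ℝ), ∀ R : ℝ, 1 ≤ R → ∀ S : Finset Γ,
      (∀ γ ∈ S, coshDist (γ : SL2R) ≤ R) → (S.card : ℝ) ≤ C * R := by
  obtain ⟨N, hN, hS⟩ := exists_card_le Γ hdisc 12
  have shell : ∀ n : ℕ, ∀ S : Finset Γ, (∀ γ ∈ S, (2 : ℝ) ^ n ≤ coshDist (γ : SL2R) ∧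
      coshDist (γ : SL2R) < 2 ^ (n + 1)) → S.card ≤ N * (9 * 2 ^ n) := by
    intro n S h
    have hp : (0 : ℝ) < 2 ^ n := by positivity
    have c1 := Finset.card_le_mul_card_image (f := fun γ : Γ => ⌊theta (γ : SL2R) * 2 ^ n⌋) S N ?_
    · refine c1.trans (Nat.mul_le_mul_left _ ?_)
      have hsub : S.image (fun γ : Γ => ⌊theta (γ : SL2R) * 2 ^ n⌋)
          ⊆ Finset.Icc (-(4 * 2 ^ n) : ℤ) (4 * 2 ^ n) := by
        intro k hk
        obtain ⟨γ, -, rfl⟩ := Finset.mem_image.1 hk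
        have t1 : -π < theta (γ : SL2R) := Complex.neg_pi_lt_arg _
        have t2 : theta (γ : SL2R) ≤ π := Complex.arg_le_pi _
        have t3 := Real.pi_lt_four
        rw [Finset.mem_Icc]
        constructor
        · rw [Int.le_floor]
          push_cast
          nlinarith
        · have : (⌊theta (γ : SL2R) * 2 ^ n⌋ : ℝ) ≤ 4 * 2 ^ n :=
            (Int.floor_le _).trans (by nlinarith)
          exact_mod_cast this
      refine (Finset.card_le_card hsub).trans ?_
      rw [Int.card_Icc]
      have : (1 : ℤ) ≤ 2 ^ n := one_le_pow₀ (by norm_num)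
      have hcast : ((2 ^ n : ℕ) : ℤ) = 2 ^ n := by push_cast; rfl
      omega
    · intro k _
      apply hS
      intro g hg h' hh'
      obtain ⟨gS, gk⟩ := Finset.mem_filter.1 hg
      obtain ⟨hS', hk⟩ := Finset.mem_filter.1 hh'
      obtain ⟨a1, a2⟩ := h g gS
      obtain ⟨b1, b2⟩ := h h' hS'
      rw [pow_succ] at a2 b2
      have hfl := Int.abs_sub_lt_one_of_floor_eq_floor (gk.trans hk.symm)
      have hcos : 1 - Real.cos (theta (g : SL2R) - theta (h' : SL2R))
          ≤ ((2 : ℝ) ^ n)⁻¹ ^ 2 / 2 := by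
        have h1 := Real.one_sub_sq_div_two_le_cos (x := theta (g : SL2R) - theta (h' : SL2R))
        have h2 : |theta (g : SL2R) - theta (h' : SL2R)| ≤ ((2 : ℝ) ^ n)⁻¹ := by
          rw [← sub_mul, abs_mul, abs_of_pos hp] at hfl
          rw [← one_div, le_div_iff₀ hp]
          exact hfl.le
        have h3 := pow_le_pow_left₀ (abs_nonneg _) h2 2
        rw [sq_abs] at h3
        linarith
      refine (fnormSq_inv_mul_le (B := 2 ^ n * 2) (by linarith) (by linarith) a2.le b2.le
        hcos).trans (le_of_eq ?_)
      field_simp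
      norm_num
  have ball : ∀ n : ℕ, ∀ S : Finset Γ, (∀ γ ∈ S, coshDist (γ : SL2R) < 2 ^ n) →
      S.card ≤ N * (9 * 2 ^ n) := by
    intro n
    induction n with
    | zero =>
      intro S h
      have : S = ∅ := Finset.eq_empty_of_forall_notMem fun γ hγ => by
        have h1 := h γ hγ
        have h2 := one_le_coshDist (γ : SL2R)
        rw [pow_zero] at h1
        linarith
      simp [this]
    | succ n ih =>
      intro S h
      classical
      rw [← Finset.card_filter_add_card_filter_not (s := S)
        (fun γ : Γ => coshDist (γ : SL2R) < 2 ^ n)]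
      have h1 := ih (S.filter (fun γ : Γ => coshDist (γ : SL2R) < 2 ^ n))
        (fun γ hγ => (Finset.mem_filter.1 hγ).2)
      have h2 := shell n (S.filter (fun γ : Γ => ¬ coshDist (γ : SL2R) < 2 ^ n))
        (fun γ hγ => ⟨not_lt.1 (Finset.mem_filter.1 hγ).2, h γ (Finset.mem_filter.1 hγ).1⟩)
      calc _ ≤ _ := add_le_add h1 h2
        _ = _ := by ring
  refine ⟨18 * N, by positivity, fun R hR S h => ?_⟩
  obtain ⟨n, h1, h2⟩ := exists_nat_pow_near hR (one_lt_two)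
  have h3 := ball (n + 1) S (fun γ hγ => (h γ hγ).trans_lt h2)
  have h4 : (S.card : ℝ) ≤ N * (9 * 2 ^ (n + 1)) := by exact_mod_cast h3
  have h5 : (0 : ℝ) ≤ N := by positivity
  calc (S.card : ℝ) ≤ N * (9 * 2 ^ (n + 1)) := h4
    _ = 18 * N * 2 ^ n := by ring
    _ ≤ 18 * N * R := by gcongr

/-- The sector of angular width `O(Q⁻²)` inside the ball `cosh d(i, ·) ≤ Q²/2` lies in a tube of
bounded width about a geodesic segment of length `O(log Q)`, hence contains `O(log Q)` orbit
points. -/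
lemma exists_sector_count (Γ : Subgroup SL2R) (hdisc : DiscreteTopology Γ) (ξ : ℝ) :
    ∃ C > (0 : ℝ), ∀ Q : ℝ, 20 ≤ Q → ∀ α : ℝ, ∀ S : Finset Γ,
      (∀ γ ∈ S, coshDist (γ : SL2R) ≤ Q ^ 2 / 2 ∧
        1 - Real.cos (α - theta (γ : SL2R)) ≤ 2 * ξ ^ 2 / Q ^ 4) →
      (S.card : ℝ) ≤ C * Real.log Q := by
  obtain ⟨N, hN, hS⟩ := exists_card_le Γ hdisc (8 + 4 * ξ ^ 2)
  refine ⟨5 * N, by positivity, fun Q hQ α S h => ?_⟩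
  have hQ0 : 0 < Q := by linarith
  have hlog : 1 ≤ Real.log Q := by
    rw [Real.le_log_iff_exp_le hQ0]
    linarith [Real.exp_one_lt_d9]
  -- the dyadic shell index `n`, with `2ⁿ ≤ cosh t < 2ⁿ⁺¹`
  have hex : ∀ γ : Γ, ∃ n : ℕ, (2 : ℝ) ^ n ≤ coshDist (γ : SL2R) ∧
      coshDist (γ : SL2R) < 2 ^ (n + 1) :=
    fun γ => exists_nat_pow_near (one_le_coshDist _) one_lt_two
  choose f hf1 hf2 using hex
  have c1 := Finset.card_le_mul_card_image (f := f) S N ?_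
  · have hsub : S.image f ⊆ Finset.range (⌊4 * Real.log Q⌋₊ + 1) := by
      intro k hk
      obtain ⟨γ, hγ, rfl⟩ := Finset.mem_image.1 hk
      rw [Finset.mem_range, Nat.lt_succ_iff]
      apply Nat.le_floor
      have h1 : (2 : ℝ) ^ f γ ≤ Q ^ 2 :=
        (hf1 γ).trans ((h γ hγ).1.trans (by nlinarith))
      have h2 := Real.log_le_log (by positivity) h1
      rw [Real.log_pow, Real.log_pow] at h2
      have h3 := Real.log_two_gt_d9
      have h4 : (0 : ℝ) ≤ f γ := Nat.cast_nonneg _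
      push_cast at h2
      nlinarith
    have c2 := Finset.card_le_card hsub
    rw [Finset.card_range] at c2
    have c3 : (S.card : ℝ) ≤ N * (⌊4 * Real.log Q⌋₊ + 1) := by
      exact_mod_cast c1.trans (Nat.mul_le_mul_left _ c2)
    have c4 : (⌊4 * Real.log Q⌋₊ : ℝ) ≤ 4 * Real.log Q := Nat.floor_le (by linarith)
    calc (S.card : ℝ) ≤ N * (⌊4 * Real.log Q⌋₊ + 1) := c3
      _ ≤ N * (4 * Real.log Q + Real.log Q) := by gcongr
      _ = 5 * N * Real.log Q := by ring
  · intro k _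
    apply hS
    intro g hg h' hh'
    obtain ⟨gS, gk⟩ := Finset.mem_filter.1 hg
    obtain ⟨hS', hk⟩ := Finset.mem_filter.1 hh'
    have a1 := hf1 g
    have a2 := hf2 g
    have b1 := hf1 h'
    have b2 := hf2 h'
    rw [gk] at a1 a2
    rw [hk] at b1 b2
    rw [pow_succ] at a2 b2
    have hcos := one_sub_cos_triangle (theta (g : SL2R)) (theta (h' : SL2R)) α
    have hcos' : 1 - Real.cos (theta (g : SL2R) - theta (h' : SL2R)) ≤ 8 * ξ ^ 2 / Q ^ 4 := by
      have e : 8 * ξ ^ 2 / Q ^ 4 = 2 * (2 * ξ ^ 2 / Q ^ 4) + 2 * (2 * ξ ^ 2 / Q ^ 4) := by ring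
      linarith [(h g gS).2, (h h' hS').2]
    refine (fnormSq_inv_mul_le (by linarith) (by linarith) (h g gS).1 (h h' hS').1
      hcos').trans (le_of_eq ?_)
    field_simp
    ring

/-- If `g·i` and `h·i` are nearly aligned as seen from `i` but at distance at least
`arccosh (T²/2)`, then the nearer of the two satisfies `cosh t = O(Q²/T²)`. -/
lemma coshDist_le_of_far {g h : SL2R} {ξ Q T : ℝ} (hQ : 0 < Q) (hT : 0 < T)
    (hg : coshDist g ≤ Q ^ 2 / 2) (hh : coshDist h ≤ Q ^ 2 / 2) (hgh : coshDist g ≤ coshDist h)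
    (hcos : 1 - Real.cos (theta g - theta h) ≤ 2 * ξ ^ 2 / Q ^ 4)
    (hfar : T ^ 2 ≤ fnormSq (g⁻¹ * h)) :
    coshDist g ≤ (4 + ξ ^ 2) / 2 * (Q ^ 2 / T ^ 2) := by
  have g1 := one_le_coshDist g
  have h1 := one_le_coshDist h
  have k1 : (coshDist g * coshDist h - sinhDist g * sinhDist h) * coshDist g
      ≤ 2 * coshDist h := by
    have := cosh_sub_mul_le g h
    by_contra! hc
    have := mul_lt_mul_of_pos_right hc (show 0 < coshDist h by linarith)
    nlinarith
  have k2 : sinhDist g * sinhDist h ≤ Q ^ 2 / 2 * (Q ^ 2 / 2) :=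
    mul_le_mul ((sinhDist_le g).trans hg) ((sinhDist_le h).trans hh)
      (sinhDist_nonneg h) (by positivity)
  have k3 : sinhDist g * sinhDist h * (1 - Real.cos (theta g - theta h)) ≤ ξ ^ 2 / 2 := by
    refine (mul_le_mul k2 hcos (by linarith [Real.cos_le_one (theta g - theta h)])
      (by positivity)).trans (le_of_eq ?_)
    field_simp
  rw [fnormSq_inv_mul] at hfar
  have k4 : coshDist g * T ^ 2 ≤ (4 + ξ ^ 2) * coshDist h := by
    have k5 := mul_le_mul_of_nonneg_right hfar (show 0 ≤ coshDist g by linarith)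
    have k6 := mul_le_mul_of_nonneg_right k3 (show 0 ≤ coshDist g by linarith)
    have k7 := mul_le_mul_of_nonneg_left hgh (show 0 ≤ ξ ^ 2 by positivity)
    nlinarith
  rw [mul_div_assoc', le_div_iff₀ (by positivity)]
  nlinarith [sq_nonneg ξ]

lemma angDist_comm (a b : ℝ) : angDist a b = angDist b a := by
  unfold angDist
  rw [← neg_sub b a, Real.Angle.coe_neg, Real.Angle.abs_toReal_neg]

lemma fnormSq_inv (g : SL2R) : fnormSq g⁻¹ = fnormSq g := by
  simp [fnormSq, Matrix.SpecialLinearGroup.coe_inv, Matrix.adjugate_fin_two]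
  ring

/-- Proposition 1.10: bound on the number of far off-diagonal pairs. -/
theorem error_count_bound (Γ : Subgroup SL2R) (hdisc : DiscreteTopology Γ) :
    ∀ ξ : ℝ, 0 < ξ → ∃ C > (0:ℝ), ∀ Q T : ℝ, 20 ≤ Q → 1 ≤ T → T ≤ Q →
      (Nat.card {p : Γ × Γ //
          (p.1 : SL2R) • UpperHalfPlane.I ≠ UpperHalfPlane.I ∧
          (p.2 : SL2R) • UpperHalfPlane.I ≠ UpperHalfPlane.I ∧
          fnorm (p.1 : SL2R) ≤ Q ∧ fnorm (p.2 : SL2R) ≤ Q ∧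
          angDist (theta (p.1 : SL2R)) (theta (p.2 : SL2R)) < 2 * ξ / Q ^ 2 ∧
          T ≤ fnorm ((p.1 : SL2R)⁻¹ * (p.2 : SL2R))} : ℝ)
        ≤ C * Q ^ 2 * Real.log Q / T ^ 2 := by
  intro ξ hξ
  obtain ⟨C₁, hC₁, ball⟩ := exists_ball_count Γ hdisc
  obtain ⟨C₂, hC₂, sector⟩ := exists_sector_count Γ hdisc ξ
  refine ⟨2 * (C₂ * (C₁ * ((4 + ξ ^ 2) / 2))), by positivity, fun Q T hQ hT hTQ => ?_⟩
  have hQ0 : 0 < Q := by linarith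
  have hT0 : 0 < T := by linarith
  have hlog : 0 ≤ Real.log Q := Real.log_nonneg (by linarith)
  have hcosh : ∀ g : SL2R, fnorm g ≤ Q → coshDist g ≤ Q ^ 2 / 2 := by
    intro g hg
    have : fnormSq g ≤ Q ^ 2 := (Real.sqrt_le_left hQ0.le).1 hg
    unfold coshDist
    linarith
  have hcos : ∀ a b : ℝ, angDist a b < 2 * ξ / Q ^ 2 →
      1 - Real.cos (a - b) ≤ 2 * ξ ^ 2 / Q ^ 4 := by
    intro a b hab
    have h0 : 0 ≤ angDist a b := abs_nonneg _
    have h1 : angDist a b ^ 2 ≤ (2 * ξ / Q ^ 2) ^ 2 := pow_le_pow_left₀ h0 hab.le 2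
    have h2 : (2 * ξ / Q ^ 2) ^ 2 / 2 = 2 * ξ ^ 2 / Q ^ 4 := by field_simp
    linarith [one_sub_cos_le a b]
  have hR : 1 ≤ (4 + ξ ^ 2) / 2 * (Q ^ 2 / T ^ 2) := by
    have h1 : 1 ≤ Q ^ 2 / T ^ 2 := by
      rw [one_le_div (by positivity)]
      exact pow_le_pow_left₀ hT0.le hTQ 2
    nlinarith [sq_nonneg ξ]
  -- pairs are counted by their nearer member, which lies in a small ball, and the farther
  -- one, which lies in the thin sector around it
  have half : ∀ P : Finset (Γ × Γ), (∀ p ∈ P, fnorm (p.1 : SL2R) ≤ Q ∧ fnorm (p.2 : SL2R) ≤ Q ∧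
      angDist (theta (p.1 : SL2R)) (theta (p.2 : SL2R)) < 2 * ξ / Q ^ 2 ∧
      T ^ 2 ≤ fnormSq ((p.1 : SL2R)⁻¹ * (p.2 : SL2R)) ∧
      coshDist (p.1 : SL2R) ≤ coshDist (p.2 : SL2R)) →
      (P.card : ℝ) ≤ C₂ * Real.log Q * (C₁ * ((4 + ξ ^ 2) / 2 * (Q ^ 2 / T ^ 2))) := by
    intro P hP
    classical
    rw [Finset.card_eq_sum_card_image Prod.fst P]
    push_cast
    have hfib : ∀ g ∈ P.image Prod.fst,
        (((P.filter (fun p => p.1 = g)).card : ℕ) : ℝ) ≤ C₂ * Real.log Q := by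
      intro g _
      have hinj : Set.InjOn Prod.snd (P.filter (fun p => p.1 = g) : Set (Γ × Γ)) := by
        intro a ha b hb hab
        have ha' := (Finset.mem_filter.1 (Finset.mem_coe.1 ha)).2
        have hb' := (Finset.mem_filter.1 (Finset.mem_coe.1 hb)).2
        exact Prod.ext (ha'.trans hb'.symm) hab
      rw [← Finset.card_image_of_injOn hinj]
      refine sector Q hQ (theta (g : SL2R)) _ fun γ hγ => ?_
      obtain ⟨p, hp, rfl⟩ := Finset.mem_image.1 hγ
      obtain ⟨hpP, rfl⟩ := Finset.mem_filter.1 hp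
      obtain ⟨-, h2, h3, -, -⟩ := hP p hpP
      exact ⟨hcosh _ h2, hcos _ _ h3⟩
    refine (Finset.sum_le_card_nsmul _ _ _ hfib).trans ?_
    rw [nsmul_eq_mul, mul_comm]
    refine mul_le_mul_of_nonneg_left (ball _ hR _ fun γ hγ => ?_) (by positivity)
    obtain ⟨p, hp, rfl⟩ := Finset.mem_image.1 hγ
    obtain ⟨h1, h2, h3, h4, h5⟩ := hP p hp
    exact coshDist_le_of_far hQ0 hT0 (hcosh _ h1) (hcosh _ h2) h5 (hcos _ _ h3) h4
  have hrhs : 2 * (C₂ * (C₁ * ((4 + ξ ^ 2) / 2))) * Q ^ 2 * Real.log Q / T ^ 2 =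
      C₂ * Real.log Q * (C₁ * ((4 + ξ ^ 2) / 2 * (Q ^ 2 / T ^ 2)))
      + C₂ * Real.log Q * (C₁ * ((4 + ξ ^ 2) / 2 * (Q ^ 2 / T ^ 2))) := by ring
  rw [hrhs]
  set A : Set (Γ × Γ) := {p : Γ × Γ |
          (p.1 : SL2R) • UpperHalfPlane.I ≠ UpperHalfPlane.I ∧
          (p.2 : SL2R) • UpperHalfPlane.I ≠ UpperHalfPlane.I ∧
          fnorm (p.1 : SL2R) ≤ Q ∧ fnorm (p.2 : SL2R) ≤ Q ∧
          angDist (theta (p.1 : SL2R)) (theta (p.2 : SL2R)) < 2 * ξ / Q ^ 2 ∧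
          T ≤ fnorm ((p.1 : SL2R)⁻¹ * (p.2 : SL2R))} with hA
  change (Nat.card A : ℝ) ≤ _
  -- `Nat.card` of an infinite type is `0`, so finiteness of `A` is not needed here
  rcases A.finite_or_infinite with hfin | hinf
  swap
  · have : Infinite A := hinf.to_subtype
    rw [Nat.card_eq_zero_of_infinite]
    push_cast
    positivity
  rw [Nat.card_coe_set_eq, Set.ncard_eq_toFinset_card A hfin]
  classical
  rw [← Finset.card_filter_add_card_filter_not (s := hfin.toFinset)
    (fun p : Γ × Γ => coshDist (p.1 : SL2R) ≤ coshDist (p.2 : SL2R))]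
  push_cast
  have hsq : ∀ g : SL2R, T ≤ fnorm g → T ^ 2 ≤ fnormSq g := fun g hg =>
    (Real.le_sqrt' hT0).1 hg
  refine add_le_add (half _ fun p hp => ?_) ?_
  · obtain ⟨hpA, hle⟩ := Finset.mem_filter.1 hp
    obtain ⟨-, -, h1, h2, h3, h4⟩ := (Set.Finite.mem_toFinset hfin).1 hpA
    exact ⟨h1, h2, h3, hsq _ h4, hle⟩
  · rw [← Finset.card_image_of_injective _ Prod.swap_injective]
    refine half _ fun q hq => ?_
    obtain ⟨p, hp, rfl⟩ := Finset.mem_image.1 hq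
    obtain ⟨hpA, hle⟩ := Finset.mem_filter.1 hp
    obtain ⟨-, -, h1, h2, h3, h4⟩ := (Set.Finite.mem_toFinset hfin).1 hpA
    refine ⟨h2, h1, (angDist_comm _ _).trans_lt h3, ?_, (not_le.1 hle).le⟩
    rw [← fnormSq_inv]
    simpa using hsq _ h4
end
end
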